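/- arXiv:math/0103060 — 2 statements merged into one kernel-verified Lean document; each statement's English description precedes it below -/
import Mathlib

section
/- Every irreducible integral H_n-module L is self-dual: L ≅ L^τ. -/
set_option maxHeartbeats 1000000

namespace HC

/-- Generators of the affine Hecke–Clifford superalgebra `H_n`. -/
inductive Gen (n : ℕ) : Type
  | X : Fin n → Gen n
  | Xinv : Fin n → Gen n
  | C : Fin n → Gen n
  | T : Fin (n - 1) → Gen n

/-- The node `i` of `Fin n`, for `i : Fin (n-1)` (1-based: the node `i`). -/
def lo {n : ℕ} (i : Fin (n - 1)) : Fin n :=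
  ⟨i.val, by have := i.isLt; omega⟩

/-- The node `i+1` of `Fin n`, for `i : Fin (n-1)`. -/
def hi {n : ℕ} (i : Fin (n - 1)) : Fin n :=
  ⟨i.val + 1, by have := i.isLt; omega⟩

variable (F : Type) [Field F]

/-- The free algebra on the generators. -/
abbrev FA (n : ℕ) : Type := FreeAlgebra F (Gen n)

noncomputable def fx {n : ℕ} (i : Fin n) : FA F n := FreeAlgebra.ι F (Gen.X i)
noncomputable def fxinv {n : ℕ} (i : Fin n) : FA F n := FreeAlgebra.ι F (Gen.Xinv i)
noncomputable def fc {n : ℕ} (i : Fin n) : FA F n := FreeAlgebra.ι F (Gen.C i)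
noncomputable def ft {n : ℕ} (i : Fin (n - 1)) : FA F n := FreeAlgebra.ι F (Gen.T i)

/-- The defining relations of the affine Hecke–Clifford superalgebra, with parameter
`q` and `ξ = q - q⁻¹`. -/
inductive Rel (q : F) (n : ℕ) : FA F n → FA F n → Prop
  | XXinv (i : Fin n) : Rel q n (fx F i * fxinv F i) 1
  | XinvX (i : Fin n) : Rel q n (fxinv F i * fx F i) 1
  | XX (i j : Fin n) : Rel q n (fx F i * fx F j) (fx F j * fx F i)
  | XiXi (i j : Fin n) : Rel q n (fxinv F i * fxinv F j) (fxinv F j * fxinv F i)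
  | XXi (i j : Fin n) (h : i ≠ j) : Rel q n (fx F i * fxinv F j) (fxinv F j * fx F i)
  | CC (i : Fin n) : Rel q n (fc F i * fc F i) 1
  | Canti (i j : Fin n) (h : i ≠ j) : Rel q n (fc F i * fc F j) (-(fc F j * fc F i))
  | CX (i : Fin n) : Rel q n (fc F i * fx F i) (fxinv F i * fc F i)
  | CXi (i : Fin n) : Rel q n (fc F i * fxinv F i) (fx F i * fc F i)
  | CXo (i j : Fin n) (h : i ≠ j) : Rel q n (fc F i * fx F j) (fx F j * fc F i)
  | CXio (i j : Fin n) (h : i ≠ j) : Rel q n (fc F i * fxinv F j) (fxinv F j * fc F i)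
  | Tquad (i : Fin (n - 1)) : Rel q n (ft F i * ft F i) ((q - q⁻¹) • ft F i + 1)
  | Tbraid (i j : Fin (n - 1)) (h : (j : ℕ) = (i : ℕ) + 1) :
      Rel q n (ft F i * ft F j * ft F i) (ft F j * ft F i * ft F j)
  | TTfar (i j : Fin (n - 1)) (h : (i : ℕ) + 1 < (j : ℕ)) :
      Rel q n (ft F i * ft F j) (ft F j * ft F i)
  | TC (i : Fin (n - 1)) : Rel q n (ft F i * fc F (lo i)) (fc F (hi i) * ft F i)
  | TCo (i : Fin (n - 1)) (j : Fin n) (h1 : j ≠ lo i) (h2 : j ≠ hi i) :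
      Rel q n (ft F i * fc F j) (fc F j * ft F i)
  | TXo (i : Fin (n - 1)) (j : Fin n) (h1 : j ≠ lo i) (h2 : j ≠ hi i) :
      Rel q n (ft F i * fx F j) (fx F j * ft F i)
  | TXio (i : Fin (n - 1)) (j : Fin n) (h1 : j ≠ lo i) (h2 : j ≠ hi i) :
      Rel q n (ft F i * fxinv F j) (fxinv F j * ft F i)
  | cross (i : Fin (n - 1)) :
      Rel q n ((ft F i + (q - q⁻¹) • (fc F (lo i) * fc F (hi i))) * fx F (lo i) * ft F i)
        (fx F (hi i))

/-- The affine Hecke–Clifford superalgebra `H_n` over `F` with parameter `q`. -/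
abbrev H (q : F) (n : ℕ) : Type := RingQuot (Rel F q n)

noncomputable def X (q : F) {n : ℕ} (i : Fin n) : H F q n :=
  RingQuot.mkAlgHom F (Rel F q n) (fx F i)

noncomputable def Xinv (q : F) {n : ℕ} (i : Fin n) : H F q n :=
  RingQuot.mkAlgHom F (Rel F q n) (fxinv F i)

noncomputable def C (q : F) {n : ℕ} (i : Fin n) : H F q n :=
  RingQuot.mkAlgHom F (Rel F q n) (fc F i)

noncomputable def T (q : F) {n : ℕ} (i : Fin (n - 1)) : H F q n :=
  RingQuot.mkAlgHom F (Rel F q n) (ft F i)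

/-- `q` is either a primitive root of unity of odd order (including `q = 1`)
or not a root of unity at all (and `q ≠ 0`). -/
def GoodParam (q : F) : Prop :=
  q ≠ 0 ∧ ((∃ m : ℕ, Odd m ∧ IsPrimitiveRoot q m) ∨ ∀ m : ℕ, 0 < m → q ^ m ≠ 1)

/-- `X_i^a` for an integer exponent `a ∈ ℤ`. -/
noncomputable def XZ (q : F) {n : ℕ} (i : Fin n) (a : ℤ) : H F q n :=
  if 0 ≤ a then X F q i ^ a.toNat else Xinv F q i ^ (-a).toNat

/-- The monomial `X^α = X_1^{α_1} ⋯ X_n^{α_n}` for `α ∈ ℤ^n`. -/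
noncomputable def Xmon (q : F) {n : ℕ} (α : Fin n → ℤ) : H F q n :=
  ((List.finRange n).map fun i => XZ F q i (α i)).prod

/-- The monomial `C^β = C_1^{β_1} ⋯ C_n^{β_n}` for `β ∈ {0,1}^n`. -/
noncomputable def Cmon (q : F) {n : ℕ} (β : Fin n → Bool) : H F q n :=
  ((List.finRange n).map fun i => if β i then C F q i else 1).prod

/-- The basic transposition `s_i = (i, i+1)` of `S_n`. -/
def s {n : ℕ} (i : Fin (n - 1)) : Equiv.Perm (Fin n) := Equiv.swap (lo i) (hi i)

/-- The Coxeter length (number of inversions) of a permutation of `Fin n`. -/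
def len {n : ℕ} (w : Equiv.Perm (Fin n)) : ℕ :=
  ((Finset.univ : Finset (Fin n × Fin n)).filter fun p => p.1 < p.2 ∧ w p.2 < w p.1).card

/-- `Tw` is the family of standard basis elements `T_w`, `w ∈ S_n`: it satisfies
`T_1 = 1`, `T_{s_i} = T_i`, and `T_{s_i w} = T_i T_w` whenever `ℓ(s_i w) = ℓ(w) + 1`.
These conditions determine the family uniquely. -/
def IsTFam (q : F) {n : ℕ} (Tw : Equiv.Perm (Fin n) → H F q n) : Prop :=
  Tw 1 = 1 ∧ (∀ i : Fin (n - 1), Tw (s i) = T F q i) ∧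
    ∀ (i : Fin (n - 1)) (w : Equiv.Perm (Fin n)),
      len (s i * w) = len w + 1 → Tw (s i * w) = T F q i * Tw w

/-- `h` is the quantum characteristic of `q`:  the smallest positive integer with
`q^{1-h} + q^{3-h} + ⋯ + q^{h-1} = 0`. -/
def qcharEq (q : F) (h : ℕ) : Prop :=
  0 < h ∧ (∑ k ∈ Finset.range h, q ^ (1 - (h : ℤ) + 2 * (k : ℤ))) = 0 ∧
    ∀ h' : ℕ, 0 < h' → h' < h →
      (∑ k ∈ Finset.range h', q ^ (1 - (h' : ℤ) + 2 * (k : ℤ))) ≠ 0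

/-- `i ∈ I = {0, 1, …, ℓ}` where `ℓ = (h-1)/2` (no condition if the quantum
characteristic is infinite). -/
def memI (q : F) (i : ℕ) : Prop := ∀ h : ℕ, qcharEq F q h → 2 * i + 1 ≤ h

/-- `q(i) = 2(q^{2i+1} + q^{-2i-1})/(q + q⁻¹)`. -/
noncomputable def qres (q : F) (i : ℕ) : F :=
  2 * (q ^ (2 * i + 1) + q⁻¹ ^ (2 * i + 1)) / (q + q⁻¹)

/-- Index of the block containing position `k` (0-based), for a composition given as a
list of parts. -/
def blk : List ℕ → ℕ → ℕ
  | [], _ => 0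
  | a :: rest, k => if k < a then 0 else blk rest (k - a) + 1

/-- Membership in the Young subgroup `S_μ ⊆ S_n`. -/
def InYoung {n : ℕ} (μ : List ℕ) (w : Equiv.Perm (Fin n)) : Prop :=
  ∀ k : Fin n, blk μ (w k).val = blk μ k.val

/-- `μ` is a composition of `n`. -/
def IsComposition (μ : List ℕ) (n : ℕ) : Prop := (∀ a ∈ μ, 0 < a) ∧ μ.sum = n

/-- The parabolic subalgebra generated by all `X_i^{±1}`, `C_i`, and the `T_j` with
`j` in a set `J` of admissible indices. -/
def parabolicJ (q : F) {n : ℕ} (J : Set (Fin (n - 1))) : Subalgebra F (H F q n) :=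
  Algebra.adjoin F
    ((Set.range fun i : Fin n => X F q i) ∪ (Set.range fun i : Fin n => Xinv F q i) ∪
      (Set.range fun i : Fin n => C F q i) ∪ {h | ∃ j ∈ J, h = T F q j})

/-- The parabolic subalgebra `H_μ` for a composition `μ`. -/
def parabolicC (q : F) {n : ℕ} (μ : List ℕ) : Subalgebra F (H F q n) :=
  parabolicJ F q {j | InYoung μ (s j)}

/-- The classical parabolic subalgebra `H^cl_μ`, generated by the `T_j` with `s_j ∈ S_μ`. -/
def clparC (q : F) {n : ℕ} (μ : List ℕ) : Subalgebra F (H F q n) :=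
  Algebra.adjoin F {h | ∃ j : Fin (n - 1), InYoung μ (s j) ∧ h = T F q j}

/-- The finite Hecke–Clifford subalgebra `H^fn_n`, generated by all `C_i` and `T_j`. -/
def Hfin (q : F) (n : ℕ) : Subalgebra F (H F q n) :=
  Algebra.adjoin F
    ((Set.range fun i : Fin n => C F q i) ∪ {h | ∃ j : Fin (n - 1), h = T F q j})

/-- `x` is a minimal length `(S_μ, S_ν)`-double coset representative. -/
def IsMinDC {n : ℕ} (μ ν : List ℕ) (x : Equiv.Perm (Fin n)) : Prop :=
  ∀ u v : Equiv.Perm (Fin n), InYoung μ u → InYoung ν v → len x ≤ len (u * x * v)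

/-- `w ∈ S_μ x S_ν`. -/
def InDC {n : ℕ} (μ ν : List ℕ) (x w : Equiv.Perm (Fin n)) : Prop :=
  ∃ u v : Equiv.Perm (Fin n), InYoung μ u ∧ InYoung ν v ∧ w = u * x * v

/-- A covering step in the Bruhat order: multiplication by a reflection increasing length. -/
def BruhatStep {n : ℕ} (v w : Equiv.Perm (Fin n)) : Prop :=
  ∃ a b : Fin n, a ≠ b ∧ w = Equiv.swap a b * v ∧ len v < len w

/-- The Bruhat order on `S_n`. -/
def BruhatLE {n : ℕ} : Equiv.Perm (Fin n) → Equiv.Perm (Fin n) → Prop :=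
  Relation.ReflTransGen BruhatStep

/-- The space of `A`-equivariant linear maps between two representations of the
`F`-algebra `A`. -/
def eqvHoms {A : Type} [Ring A] [Algebra F A] {M N : Type}
    [AddCommGroup M] [Module F M] [AddCommGroup N] [Module F N]
    (ρM : A →ₐ[F] Module.End F M) (ρN : A →ₐ[F] Module.End F N) :
    Submodule F (M →ₗ[F] N) where
  carrier := {f | ∀ (x : A) (m : M), f (ρM x m) = ρN x (f m)}
  add_mem' := by
    intro f g hf hg x m
    simp only [LinearMap.add_apply, hf x m, hg x m, map_add]
  zero_mem' := by
    intro x m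
    simp only [LinearMap.zero_apply, map_zero]
  smul_mem' := by
    intro c f hf x m
    simp only [LinearMap.smul_apply, hf x m, map_smul]

/-- `(E, ρE, ι)` is the module induced along the algebra morphism `φ : B →ₐ A` from
the `B`-representation `(M, ρ)`, i.e. `E = A ⊗_B M`, characterized by its universal
property. -/
def IsInducedAlong {A B : Type} [Ring A] [Ring B] [Algebra F A] [Algebra F B]
    (φ : B →ₐ[F] A) {M : Type} [AddCommGroup M] [Module F M]
    (ρ : B →ₐ[F] Module.End F M) {E : Type} [AddCommGroup E] [Module F E]
    (ρE : A →ₐ[F] Module.End F E) (ι : M →ₗ[F] E) : Prop :=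
  (∀ (b : B) (m : M), ι (ρ b m) = ρE (φ b) (ι m)) ∧
    ∀ (P : Type) [AddCommGroup P] [Module F P],
      ∀ (ρP : A →ₐ[F] Module.End F P) (f : M →ₗ[F] P),
        (∀ (b : B) (m : M), f (ρ b m) = ρP (φ b) (f m)) →
        ∃! g : E →ₗ[F] P,
          (∀ (x : A) (e : E), g (ρE x e) = ρP x (g e)) ∧ ∀ m : M, g (ι m) = f m

/-- `δ` is the grading automorphism of the superalgebra `H_n`
(identity on even generators, `-1` on the odd generators `C_i`). -/
def IsGradingAut (q : F) {n : ℕ} (δ : H F q n →ₐ[F] H F q n) : Prop :=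
  (∀ i : Fin n, δ (X F q i) = X F q i) ∧ (∀ i : Fin n, δ (Xinv F q i) = Xinv F q i) ∧
    (∀ i : Fin n, δ (C F q i) = -C F q i) ∧ ∀ i : Fin (n - 1), δ (T F q i) = T F q i

/-- `τ` is the antiautomorphism of `H_n` with `τ(T_i) = T_i + ξ C_i C_{i+1}`,
`τ(C_j) = C_j`, `τ(X_j) = X_j`. -/
def IsTauAntiAut (q : F) {n : ℕ} (τ : H F q n →ₗ[F] H F q n) : Prop :=
  Function.Bijective τ ∧ (∀ a b : H F q n, τ (a * b) = τ b * τ a) ∧ τ 1 = 1 ∧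
    (∀ i : Fin (n - 1),
      τ (T F q i) = T F q i + (q - q⁻¹) • (C F q (lo i) * C F q (hi i))) ∧
    (∀ j : Fin n, τ (C F q j) = C F q j) ∧ (∀ j : Fin n, τ (X F q j) = X F q j) ∧
    ∀ j : Fin n, τ (Xinv F q j) = Xinv F q j

/-- `ρ'` is the representation of the subalgebra `B` obtained from the
`H_ν`-representation `ρν` by twisting with the isomorphism `φ_{x⁻¹}`
(determined by `X_i ↦ X_{x⁻¹ i}`, `C_i ↦ C_{x⁻¹ i}`, `T_w ↦ T_{x⁻¹ w x}`). -/
def IsTwistedRep (q : F) {n : ℕ} (ν : List ℕ) (x : Equiv.Perm (Fin n))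
    (B : Subalgebra F (H F q n)) {M : Type} [AddCommGroup M] [Module F M]
    (ρν : ↥(parabolicC F q (n := n) ν) →ₐ[F] Module.End F M)
    (ρ' : ↥B →ₐ[F] Module.End F M) : Prop :=
  (∀ (i : Fin n) (a : ↥B) (b : ↥(parabolicC F q (n := n) ν)),
      (a : H F q n) = X F q i → (b : H F q n) = X F q (x⁻¹ i) → ρ' a = ρν b) ∧
  (∀ (i : Fin n) (a : ↥B) (b : ↥(parabolicC F q (n := n) ν)),
      (a : H F q n) = Xinv F q i → (b : H F q n) = Xinv F q (x⁻¹ i) → ρ' a = ρν b) ∧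
  (∀ (i : Fin n) (a : ↥B) (b : ↥(parabolicC F q (n := n) ν)),
      (a : H F q n) = C F q i → (b : H F q n) = C F q (x⁻¹ i) → ρ' a = ρν b) ∧
  ∀ (j j' : Fin (n - 1)) (a : ↥B) (b : ↥(parabolicC F q (n := n) ν)),
      lo j' = x⁻¹ (lo j) → (a : H F q n) = T F q j → (b : H F q n) = T F q j' → ρ' a = ρν b

/-- The element `f = a_d X_1^d + ⋯ + a_1 X_1 + a_0` of `H_n`. -/
noncomputable def felem (q : F) (n d : ℕ) (aa : ℕ → F) : H F q n :=
  if h : 0 < n then ∑ i ∈ Finset.range (d + 1), aa i • X F q (⟨0, h⟩ : Fin n) ^ i else 0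

/-- The conditions on the coefficients of `f`: degree `d ≥ 1`, monic, and
`a_i = a_0 a_{d-i}`. -/
def GoodPoly (d : ℕ) (aa : ℕ → F) : Prop :=
  1 ≤ d ∧ aa d = 1 ∧ (∀ i ≤ d, aa i = aa 0 * aa (d - i)) ∧ ∀ i : ℕ, d < i → aa i = 0

/-- The relation generating the two-sided ideal `I_f` of `H_n`. -/
inductive CycRel (q : F) (n d : ℕ) (aa : ℕ → F) : H F q n → H F q n → Prop
  | rel : CycRel q n d aa (felem F q n d aa) 0

/-- The cyclotomic Hecke–Clifford superalgebra `H_n^f = H_n / I_f`. -/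
abbrev Hf (q : F) (n d : ℕ) (aa : ℕ → F) : Type := RingQuot (CycRel F q n d aa)

/-- The canonical quotient map `H_n → H_n^f`. -/
noncomputable def cyc (q : F) (n d : ℕ) (aa : ℕ → F) : H F q n →ₐ[F] Hf F q n d aa :=
  RingQuot.mkAlgHom F (CycRel F q n d aa)

noncomputable def Xf (q : F) (n d : ℕ) (aa : ℕ → F) (i : Fin n) : Hf F q n d aa :=
  cyc F q n d aa (X F q i)
noncomputable def Xinvf (q : F) (n d : ℕ) (aa : ℕ → F) (i : Fin n) : Hf F q n d aa :=
  cyc F q n d aa (Xinv F q i)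
noncomputable def Cf (q : F) (n d : ℕ) (aa : ℕ → F) (i : Fin n) : Hf F q n d aa :=
  cyc F q n d aa (C F q i)
noncomputable def Tf (q : F) (n d : ℕ) (aa : ℕ → F) (i : Fin (n - 1)) : Hf F q n d aa :=
  cyc F q n d aa (T F q i)

/-- `e` is the canonical embedding `H_k^f → H_N^f` (shifting all indices by `sh`;
for `sh = 0` this is the standard identification of `H_k^f` with a subalgebra of
`H_N^f`). -/
def IsCycEmb (q : F) (k N d : ℕ) (aa : ℕ → F) (sh : ℕ)
    (e : Hf F q k d aa →ₐ[F] Hf F q N d aa) : Prop :=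
  (∀ (i : Fin k) (i' : Fin N), (i' : ℕ) = sh + (i : ℕ) →
      e (Xf F q k d aa i) = Xf F q N d aa i') ∧
  (∀ (i : Fin k) (i' : Fin N), (i' : ℕ) = sh + (i : ℕ) →
      e (Xinvf F q k d aa i) = Xinvf F q N d aa i') ∧
  (∀ (i : Fin k) (i' : Fin N), (i' : ℕ) = sh + (i : ℕ) →
      e (Cf F q k d aa i) = Cf F q N d aa i') ∧
  ∀ (j : Fin (k - 1)) (j' : Fin (N - 1)), (j' : ℕ) = sh + (j : ℕ) →
      e (Tf F q k d aa j) = Tf F q N d aa j'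

/-- `δ` is the grading automorphism of the superalgebra `H_n^f`. -/
def IsCycGrading (q : F) (n d : ℕ) (aa : ℕ → F)
    (δ : Hf F q n d aa →ₐ[F] Hf F q n d aa) : Prop :=
  (∀ i : Fin n, δ (Xf F q n d aa i) = Xf F q n d aa i) ∧
  (∀ i : Fin n, δ (Xinvf F q n d aa i) = Xinvf F q n d aa i) ∧
  (∀ i : Fin n, δ (Cf F q n d aa i) = -Cf F q n d aa i) ∧
  ∀ j : Fin (n - 1), δ (Tf F q n d aa j) = Tf F q n d aa j

/-- The elements `f_1 = f`, `f_{i+1} = (T_i + ξ C_i C_{i+1}) f_i T_i` of `H_n`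
(0-based indexing: `fseq k = f_{k+1}`). -/
noncomputable def fseq (q : F) (n d : ℕ) (aa : ℕ → F) : ℕ → H F q n
  | 0 => felem F q n d aa
  | k + 1 =>
    if h : k < n - 1 then
      (T F q (⟨k, h⟩ : Fin (n - 1)) +
          (q - q⁻¹) • (C F q (lo (⟨k, h⟩ : Fin (n - 1))) *
            C F q (hi (⟨k, h⟩ : Fin (n - 1))))) *
        fseq q n d aa k * T F q (⟨k, h⟩ : Fin (n - 1))
    else 0

/-- `f_Z = f_{z_1} ⋯ f_{z_u}` for `Z = {z_1 < ⋯ < z_u} ⊆ {1,…,n}` (0-based). -/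
noncomputable def fZ (q : F) (n d : ℕ) (aa : ℕ → F) (Z : Finset (Fin n)) : H F q n :=
  ((Z.sort (· ≤ ·)).map fun z => fseq F q n d aa (z : ℕ)).prod

end HC

/-!
Irreducible supermodules with equal characters are isomorphic up to parity, so it suffices that the
trace `f` of a representation of `H_n` satisfies `f ∘ τ = f`.  The trace form `g = f - f ∘ τ` is
shown to vanish on `p * t_w`, with `p` a product of letters `X_i^{±1}`, `C_i` and `t_w` a product of
Hecke generators, by induction on the length of `w`.  Modulo shorter words the Hecke generators
behave like nil-Coxeter generators and move letters from one position to the next.  Up to cyclic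
rotation one may therefore take `w` strictly increasing, and then collect the letters of `p` at
positions whose letters commute with each other across `t_w` up to signs.  If Clifford letters
remain, `g` is killed by the grading or by exchanging two anticommuting odd factors; if none remain,
`τ` merely reverses the product, and reversing an increasing word is invisible to a trace, so that
`g = g ∘ τ = -g`.
-/

namespace HC

/-- A property of words over `ℕ` that holds whenever a letter is repeated and for strictly
increasing words, and that can be checked after a braid move or a cyclic rotation.  The model is the
vanishing of a trace on products of nil-Coxeter generators. -/
structure CyclicBraidInvariant (S : List ℕ → Prop) : Prop where
  comm : ∀ u v a b, a + 1 < b ∨ b + 1 < a → S (u ++ b :: a :: v) → S (u ++ a :: b :: v)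
  braid : ∀ u v a, S (u ++ a :: (a + 1) :: a :: v) → S (u ++ (a + 1) :: a :: (a + 1) :: v)
  sq : ∀ u v a, S (u ++ a :: a :: v)
  rotate : ∀ u a, S (u ++ [a]) → S (a :: u)
  increasing : ∀ u : List ℕ, u.Pairwise (· < ·) → S u

namespace CyclicBraidInvariant

variable {S : List ℕ → Prop} {u u' v v' w : List ℕ}

/-- `S` holds for every word containing `u` as a factor. -/
def IsNull (S : List ℕ → Prop) (u : List ℕ) : Prop := ∀ x y, S (x ++ u ++ y)

/-- In every context, `S` for the word `u` follows from `S` for the word `v`. -/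
def ReducesTo (S : List ℕ → Prop) (u v : List ℕ) : Prop := ∀ x y, S (x ++ v ++ y) → S (x ++ u ++ y)

/-- The word `u` is null or reduces to a word in letters below `m` and at most one letter `m`; the
analogue of the double coset decomposition of a symmetric group over the next smaller one. -/
def HasTopForm (S : List ℕ → Prop) (m : ℕ) (u : List ℕ) : Prop :=
  IsNull S u ∨ (∃ v, (∀ a ∈ v, a < m) ∧ ReducesTo S u v) ∨
    ∃ v w, (∀ a ∈ v, a < m) ∧ (∀ a ∈ w, a < m) ∧ ReducesTo S u (v ++ m :: w)

theorem IsNull.append_left (h : IsNull S u) (v : List ℕ) : IsNull S (v ++ u) := fun x y => by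
  simpa only [List.append_assoc] using h (x ++ v) y

theorem IsNull.append_right (h : IsNull S u) (v : List ℕ) : IsNull S (u ++ v) := fun x y => by
  simpa only [List.append_assoc] using h x (v ++ y)

theorem ReducesTo.trans (huv : ReducesTo S u v) (hvw : ReducesTo S v w) : ReducesTo S u w :=
  fun x y h => huv x y (hvw x y h)

theorem ReducesTo.isNull (huv : ReducesTo S u v) (hv : IsNull S v) : IsNull S u :=
  fun x y => huv x y (hv x y)

theorem ReducesTo.append_left (h : ReducesTo S u u') (v : List ℕ) :
    ReducesTo S (v ++ u) (v ++ u') := fun x y => by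
  simpa only [List.append_assoc] using h (x ++ v) y

theorem ReducesTo.append_right (h : ReducesTo S u u') (v : List ℕ) :
    ReducesTo S (u ++ v) (u' ++ v) := fun x y => by
  simpa only [List.append_assoc] using h x (v ++ y)

theorem ReducesTo.hasTopForm {m : ℕ} (huv : ReducesTo S u v) :
    HasTopForm S m v → HasTopForm S m u := by
  rintro (hv | ⟨v', hv', hvv'⟩ | ⟨v', w', hv', hw', hvv'⟩)
  · exact .inl (huv.isNull hv)
  · exact .inr (.inl ⟨v', hv', huv.trans hvv'⟩)
  · exact .inr (.inr ⟨v', w', hv', hw', huv.trans hvv'⟩)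

theorem HasTopForm.append_left_of_lt {m : ℕ} (hu : HasTopForm S m u) (hv : ∀ a ∈ v, a < m) :
    HasTopForm S m (v ++ u) := by
  have hlt {w : List ℕ} (hw : ∀ a ∈ w, a < m) : ∀ a ∈ v ++ w, a < m := by
    simpa only [List.mem_append, or_imp, forall_and] using ⟨hv, hw⟩
  rcases hu with hu | ⟨w, hw, huw⟩ | ⟨w, w', hw, hw', huw⟩
  · exact .inl (hu.append_left v)
  · exact .inr (.inl ⟨v ++ w, hlt hw, huw.append_left v⟩)
  · exact .inr (.inr ⟨v ++ w, w', hlt hw, hw', by simpa using huw.append_left v⟩)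

theorem isNull_pair (hS : CyclicBraidInvariant S) (a : ℕ) : IsNull S [a, a] := fun x y => by
  simpa using hS.sq x y a

theorem reducesTo_swap (hS : CyclicBraidInvariant S) {a b : ℕ} (hab : a + 1 < b ∨ b + 1 < a) :
    ReducesTo S [a, b] [b, a] := fun x y h => by
  simpa using hS.comm x y a b hab (by simpa using h)

theorem reducesTo_braid (hS : CyclicBraidInvariant S) (a : ℕ) :
    ReducesTo S [a + 1, a, a + 1] [a, a + 1, a] := fun x y h => by
  simpa using hS.braid x y a (by simpa using h)

theorem reducesTo_move_letter (hS : CyclicBraidInvariant S) {b : ℕ}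
    (h : ∀ a ∈ u, a + 1 < b ∨ b + 1 < a) : ReducesTo S (b :: u) (u ++ [b]) := by
  induction u with
  | nil => exact fun _ _ => id
  | cons a u ih =>
    have hswap := (hS.reducesTo_swap (h a (by simp)).symm).append_right u
    exact hswap.trans ((ih fun a ha => h a (by simp [ha])).append_left [a])

theorem reducesTo_append_comm (hS : CyclicBraidInvariant S)
    (h : ∀ b ∈ u, ∀ a ∈ v, a + 1 < b ∨ b + 1 < a) : ReducesTo S (u ++ v) (v ++ u) := by
  induction u with
  | nil => rw [List.nil_append, List.append_nil]; exact fun _ _ => id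
  | cons b u ih =>
    have hmove := (hS.reducesTo_move_letter (h b (by simp))).append_right u
    rw [List.append_assoc] at hmove
    exact ((ih fun b hb => h b (by simp [hb])).append_left [b]).trans hmove

theorem hasTopForm_sandwich (hS : CyclicBraidInvariant S) {m : ℕ} (hu : HasTopForm S m u) :
    HasTopForm S (m + 1) ((m + 1) :: u ++ [m + 1]) := by
  have hctx {x y} (h : ReducesTo S x y) :
      ReducesTo S ((m + 1) :: x ++ [m + 1]) ((m + 1) :: y ++ [m + 1]) :=
    (h.append_left [m + 1]).append_right [m + 1]
  have hleft {x : List ℕ} (hx : ∀ a ∈ x, a < m) : ReducesTo S ((m + 1) :: x) (x ++ [m + 1]) :=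
    hS.reducesTo_move_letter fun a ha => .inl (Nat.succ_lt_succ (hx a ha))
  have hright {x : List ℕ} (hx : ∀ a ∈ x, a < m) : ReducesTo S (x ++ [m + 1]) ((m + 1) :: x) :=
    hS.reducesTo_append_comm (v := [m + 1]) fun b hb a ha => by
      obtain rfl := List.mem_singleton.1 ha
      exact .inr (Nat.succ_lt_succ (hx b hb))
  rcases hu with hu | ⟨v, hv, huv⟩ | ⟨v, w, hv, hw, huvw⟩
  · exact .inl ((hu.append_left [m + 1]).append_right [m + 1])
  · have hpair : ReducesTo S ((m + 1) :: v ++ [m + 1]) (v ++ [m + 1, m + 1]) := by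
      simpa using (hleft hv).append_right [m + 1]
    exact .inl (((hctx huv).trans hpair).isNull ((hS.isNull_pair _).append_left v))
  · have hv' : ReducesTo S ((m + 1) :: (v ++ m :: w) ++ [m + 1])
        (v ++ (m + 1) :: m :: (w ++ [m + 1])) := by
      simpa using (hleft hv).append_right (m :: w ++ [m + 1])
    have hw' : ReducesTo S (v ++ (m + 1) :: m :: (w ++ [m + 1]))
        (v ++ [m + 1, m, m + 1] ++ w) := by
      simpa using (hright hw).append_left (v ++ [m + 1, m])
    have hbraid : ReducesTo S (v ++ [m + 1, m, m + 1] ++ w) (v ++ [m] ++ (m + 1) :: m :: w) := by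
      simpa using ((hS.reducesTo_braid m).append_left v).append_right w
    refine .inr (.inr ⟨v ++ [m], m :: w, fun a ha => ?_, fun a ha => ?_,
      (hctx huvw).trans (hv'.trans (hw'.trans hbraid))⟩)
    · rcases List.mem_append.1 ha with ha | ha
      · exact (hv a ha).trans m.lt_succ_self
      · simp_all
    · rcases List.mem_cons.1 ha with rfl | ha
      · exact Nat.lt_succ_self _
      · exact (hw a ha).trans m.lt_succ_self

theorem hasTopForm_of_sandwich {m : ℕ}
    (hm : ∀ v : List ℕ, (∀ a ∈ v, a < m) → HasTopForm S m (m :: v ++ [m])) :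
    ∀ u : List ℕ, (∀ a ∈ u, a ≤ m) → HasTopForm S m u := by
  intro u
  induction u using List.reverseRecOn with
  | nil => exact fun _ => .inr (.inl ⟨[], by simp, fun _ _ => id⟩)
  | append_singleton u k ih =>
    intro hu
    have hk : k < m ∨ k = m := (hu k (by simp)).lt_or_eq
    have hsnoc {v : List ℕ} (hv : ∀ a ∈ v, a < m) (hk : k < m) : ∀ a ∈ v ++ [k], a < m := by
      simpa [or_imp, forall_and] using ⟨hv, hk⟩
    rcases ih fun a ha => hu a (by simp [ha]) with hnull | ⟨v, hv, huv⟩ | ⟨v, w, hv, hw, huvw⟩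
    · exact .inl (hnull.append_right [k])
    · rcases hk with hk | rfl
      · exact .inr (.inl ⟨v ++ [k], hsnoc hv hk, huv.append_right [k]⟩)
      · exact .inr (.inr ⟨v, [], hv, by simp, huv.append_right [k]⟩)
    · have hred : ReducesTo S (u ++ [k]) (v ++ m :: (w ++ [k])) := by
        simpa using huvw.append_right [k]
      rcases hk with hk | rfl
      · exact .inr (.inr ⟨v, w ++ [k], hv, hsnoc hw hk, hred⟩)
      · exact hred.hasTopForm ((hm w hw).append_left_of_lt hv)

theorem hasTopForm (hS : CyclicBraidInvariant S) (m : ℕ) :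
    ∀ u : List ℕ, (∀ a ∈ u, a ≤ m) → HasTopForm S m u := by
  induction m with
  | zero =>
    refine hasTopForm_of_sandwich fun v hv => ?_
    obtain rfl : v = [] := List.eq_nil_iff_forall_not_mem.2 fun a ha => Nat.not_lt_zero a (hv a ha)
    exact .inl (hS.isNull_pair 0)
  | succ m ih =>
    exact hasTopForm_of_sandwich fun v hv =>
      hS.hasTopForm_sandwich (ih v fun a ha => Nat.le_of_lt_succ (hv a ha))

theorem rotate_append (hS : CyclicBraidInvariant S) (h : S (v ++ u)) : S (u ++ v) := by
  induction u generalizing v with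
  | nil => simpa using h
  | cons a u ih => exact hS.rotate (u ++ v) a (by simpa using ih (v := v ++ [a]) (by simpa using h))

/-- Peeling off the largest letter of the unsorted part `u`, which occurs at most once, and rotating
it in front of the sorted part `v`. -/
theorem append_of_lt (hS : CyclicBraidInvariant S) (m : ℕ) : ∀ u v : List ℕ, (∀ a ∈ u, a < m) →
    (∀ a ∈ v, m ≤ a) → v.Pairwise (· < ·) → S (u ++ v) := by
  induction m with
  | zero =>
    intro u v hu _ hv
    obtain rfl : u = [] := List.eq_nil_iff_forall_not_mem.2 fun a ha => Nat.not_lt_zero a (hu a ha)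
    exact hS.increasing v hv
  | succ m ih =>
    intro u v hu hmv hv
    rcases hS.hasTopForm m u fun a ha => Nat.le_of_lt_succ (hu a ha) with
      hnull | ⟨w, hw, huw⟩ | ⟨w, w', hw, hw', huw⟩
    · exact hnull [] v
    · exact huw [] v (ih w v hw (fun a ha => (Nat.le_succ m).trans (hmv a ha)) hv)
    · have hcomm : ReducesTo S (w' ++ v) (v ++ w') :=
        hS.reducesTo_append_comm fun b hb a ha =>
          .inr ((Nat.succ_lt_succ (hw' b hb)).trans_le (hmv a ha))
      have hsorted : S ((w' ++ w) ++ m :: v) :=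
        ih _ _ (by simpa [or_imp, forall_and] using ⟨hw', hw⟩)
          (by simpa using fun a ha => (Nat.le_succ m).trans (hmv a ha))
          (hv.cons fun a ha => hmv a ha)
      have hrot : S (w ++ m :: (v ++ w')) := by
        simpa using hS.rotate_append (v := w') (u := w ++ m :: v) (by simpa using hsorted)
      have hprefix : S ((w ++ m :: w') ++ v) := by
        simpa using hcomm (w ++ [m]) [] (by simpa using hrot)
      exact huw [] v hprefix

theorem holds (hS : CyclicBraidInvariant S) (u : List ℕ) : S u := by
  have hlt : ∀ a ∈ u, a < u.sum + 1 := fun _ ha =>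
    Nat.lt_succ_of_le (List.single_le_sum (fun _ _ => Nat.zero_le _) _ ha)
  simpa using hS.append_of_lt (u.sum + 1) u [] hlt (by simp) .nil

end CyclicBraidInvariant

/-- The kinds of letters generating a polynomial-Clifford algebra: `x` and `x⁻¹` (told apart by a
Boolean), and the Clifford letter. -/
inductive LetterKind
  | poly (inv : Bool)
  | cliff

namespace LetterKind

/-- The parity of a letter, as a natural number. -/
def degree : LetterKind → ℕ
  | poly _ => 0
  | cliff => 1

/-- The number of Clifford letters in a word of positioned letters. -/
def wordDegree (l : List (ℕ × LetterKind)) : ℕ := (l.map fun p => p.2.degree).sum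

/-- The word `x_{i₁}^{±1} ⋯ x_{iᵣ}^{±1} c_{j₁} ⋯ c_{jₛ}`. -/
def normalWord (xs : List (ℕ × Bool)) (cs : List ℕ) : List (ℕ × LetterKind) :=
  (xs.map fun p => (p.1, poly p.2)) ++ cs.map fun i => (i, cliff)

theorem wordDegree_cons (p : ℕ × LetterKind) (l : List (ℕ × LetterKind)) :
    wordDegree (p :: l) = p.2.degree + wordDegree l := List.sum_cons

theorem wordDegree_normalWord (xs : List (ℕ × Bool)) (cs : List ℕ) :
    wordDegree (normalWord xs cs) = cs.length := by
  simp [wordDegree, normalWord, Function.comp_def, degree]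

theorem map_fst_normalWord (xs : List (ℕ × Bool)) (cs : List ℕ) :
    (normalWord xs cs).map Prod.fst = xs.map Prod.fst ++ cs := by
  simp [normalWord, Function.comp_def]

theorem filter_normalWord (P : ℕ → Bool) (xs : List (ℕ × Bool)) (cs : List ℕ) :
    (normalWord xs cs).filter (fun p => P p.1) =
      normalWord (xs.filter fun p => P p.1) (cs.filter P) := by
  simp [normalWord, List.filter_map, Function.comp_def]

end LetterKind

section Words

variable {F A : Type*} [CommRing F] [Ring A] [Algebra F A] {z : ℕ → LetterKind → A} {t : ℕ → A}

/-- The product of the letters `t i` along a word. -/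
def word (t : ℕ → A) (w : List ℕ) : A := (w.map t).prod

/-- The product of the letters `z i κ` along a word of positioned letters. -/
def letterWord (z : ℕ → LetterKind → A) (l : List (ℕ × LetterKind)) : A :=
  (l.map fun p => z p.1 p.2).prod

theorem word_cons (a : ℕ) (w : List ℕ) : word t (a :: w) = t a * word t w := List.prod_cons

theorem word_singleton (a : ℕ) : word t [a] = t a := List.prod_singleton

theorem word_append (v w : List ℕ) : word t (v ++ w) = word t v * word t w := by
  simp only [word, List.map_append, List.prod_append]

theorem letterWord_cons (p : ℕ × LetterKind) (l : List (ℕ × LetterKind)) :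
    letterWord z (p :: l) = z p.1 p.2 * letterWord z l := List.prod_cons

theorem letterWord_append (l l' : List (ℕ × LetterKind)) :
    letterWord z (l ++ l') = letterWord z l * letterWord z l' := by
  simp only [letterWord, List.map_append, List.prod_append]

theorem commute_word {y : A} {w : List ℕ} (h : ∀ i ∈ w, Commute y (t i)) : Commute y (word t w) :=
  Commute.list_prod_right _ _ <| List.forall_mem_map.2 h

theorem commute_letterWord {y : A} {l : List (ℕ × LetterKind)}
    (h : ∀ p ∈ l, Commute y (z p.1 p.2)) : Commute y (letterWord z l) :=
  Commute.list_prod_right _ _ <| List.forall_mem_map.2 h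

/-- The subalgebra generated by the polynomial and Clifford letters. -/
def polyCliff (F : Type*) {A : Type*} [CommRing F] [Ring A] [Algebra F A]
    (z : ℕ → LetterKind → A) : Subalgebra F A :=
  Algebra.adjoin F (Set.range fun p : ℕ × LetterKind => z p.1 p.2)

/-- The span of the elements `p * t_w` with `p` in `polyCliff` and `w` a word of length `< k`. -/
def heckeFiltration (F : Type*) {A : Type*} [CommRing F] [Ring A] [Algebra F A]
    (z : ℕ → LetterKind → A) (t : ℕ → A) (k : ℕ) : Submodule F A :=
  Submodule.span F {y | ∃ p ∈ polyCliff F z, ∃ w : List ℕ, w.length < k ∧ p * word t w = y}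

theorem letter_mem_polyCliff (F : Type*) [CommRing F] [Algebra F A] (i : ℕ) (κ : LetterKind) :
    z i κ ∈ polyCliff F z :=
  Algebra.subset_adjoin ⟨(i, κ), rfl⟩

theorem letterWord_mem_polyCliff (l : List (ℕ × LetterKind)) : letterWord z l ∈ polyCliff F z :=
  list_prod_mem <| List.forall_mem_map.2 fun p _ => letter_mem_polyCliff F p.1 p.2

theorem polyCliff_le_of_letterWord_mem {N : Submodule F A} (h : ∀ l, letterWord z l ∈ N) {p : A}
    (hp : p ∈ polyCliff F z) : p ∈ N := by
  have hle : Subalgebra.toSubmodule (polyCliff F z) ≤ N := by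
    rw [polyCliff, Algebra.adjoin_eq_span, Submodule.span_le]
    intro y hy
    obtain ⟨ys, hys, rfl⟩ := Submonoid.exists_list_of_mem_closure hy
    obtain ⟨l, rfl⟩ : ys ∈ Set.range (List.map fun p : ℕ × LetterKind => z p.1 p.2) := by
      rwa [Set.range_list_map]
    exact h l
  exact hle hp

theorem mem_heckeFiltration {p : A} (hp : p ∈ polyCliff F z) {w : List ℕ} {k : ℕ}
    (hw : w.length < k) : p * word t w ∈ heckeFiltration F z t k :=
  Submodule.subset_span ⟨p, hp, w, hw, rfl⟩

theorem polyCliff_subset_heckeFiltration {p : A} (hp : p ∈ polyCliff F z) :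
    p ∈ heckeFiltration F z t 1 := by
  simpa [word] using mem_heckeFiltration (t := t) hp (w := []) Nat.zero_lt_one

theorem word_mem_heckeFiltration (w : List ℕ) :
    word t w ∈ heckeFiltration F z t (w.length + 1) := by
  simpa using mem_heckeFiltration (F := F) (z := z) (one_mem _) (Nat.lt_succ_self w.length)

theorem heckeFiltration_mono : Monotone (heckeFiltration F z t) := fun _ _ h =>
  Submodule.span_mono fun _ ⟨p, hp, w, hw, e⟩ => ⟨p, hp, w, hw.trans_le h, e⟩

theorem map_heckeFiltration_mem {B : Type*} [AddCommGroup B] [Module F B] {k : ℕ} (f : A →ₗ[F] B)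
    {N : Submodule F B}
    (h : ∀ p ∈ polyCliff F z, ∀ w : List ℕ, w.length < k → f (p * word t w) ∈ N)
    {y : A} (hy : y ∈ heckeFiltration F z t k) : f y ∈ N := by
  have hle : heckeFiltration F z t k ≤ N.comap f :=
    Submodule.span_le.2 fun _ ⟨p, hp, w, hw, e⟩ => e ▸ h p hp w hw
  exact hle hy

end Words

/-- The relations of an affine Hecke-Clifford algebra used to compare traces, with the exact
commutation of a Hecke generator past a neighbouring letter replaced by commutation up to terms
without Hecke generators. -/
structure HeckeCliffordRel (F : Type*) {A : Type*} [CommRing F] [Ring A] [Algebra F A]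
    (z : ℕ → LetterKind → A) (t : ℕ → A) : Prop where
  letter_far : ∀ i j κ κ', i ≠ j →
    z i κ * z j κ' = (-1 : F) ^ (κ.degree * κ'.degree) • (z j κ' * z i κ)
  poly_poly : ∀ i b b', Commute (z i (.poly b)) (z i (.poly b'))
  cliff_poly : ∀ i b, z i .cliff * z i (.poly b) = z i (.poly !b) * z i .cliff
  cliff_sq : ∀ i, ∃ e : F, z i .cliff * z i .cliff = e • 1
  hecke_sq : ∀ i, t i * t i ∈ heckeFiltration F z t 2
  hecke_braid : ∀ i, t i * t (i + 1) * t i = t (i + 1) * t i * t (i + 1)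
  hecke_far : ∀ i j, i + 1 < j → Commute (t i) (t j)
  hecke_letter_far : ∀ i j κ, j ≠ i → j ≠ i + 1 → Commute (t i) (z j κ)
  hecke_letter_lo : ∀ i κ, t i * z i κ - z (i + 1) κ * t i ∈ polyCliff F z
  hecke_letter_hi : ∀ i κ, t i * z (i + 1) κ - z i κ * t i ∈ polyCliff F z

namespace HeckeCliffordRel

open LetterKind

variable {F A : Type*} [CommRing F] [Ring A] [Algebra F A] {z : ℕ → LetterKind → A} {t : ℕ → A}

/-! ### Filtered commutation -/

theorem exists_hecke_mul_letter (hR : HeckeCliffordRel F z t) (i j : ℕ) (κ : LetterKind) :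
    ∃ p ∈ polyCliff F z, t i * z j κ - p * t i ∈ polyCliff F z := by
  rcases eq_or_ne j i with rfl | hlo
  · exact ⟨_, letter_mem_polyCliff F _ _, hR.hecke_letter_lo j κ⟩
  rcases eq_or_ne j (i + 1) with rfl | hhi
  · exact ⟨_, letter_mem_polyCliff F _ _, hR.hecke_letter_hi i κ⟩
  · refine ⟨_, letter_mem_polyCliff F j κ, ?_⟩
    rw [(hR.hecke_letter_far i j κ hlo hhi).eq, sub_self]
    exact zero_mem _

theorem exists_hecke_mul (hR : HeckeCliffordRel F z t) (i : ℕ) {p : A} (hp : p ∈ polyCliff F z) :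
    ∃ p' ∈ polyCliff F z, t i * p - p' * t i ∈ polyCliff F z := by
  induction hp using Algebra.adjoin_induction with
  | mem y hy =>
    obtain ⟨⟨j, κ⟩, rfl⟩ := hy
    exact hR.exists_hecke_mul_letter i j κ
  | algebraMap r =>
    refine ⟨_, Subalgebra.algebraMap_mem _ r, ?_⟩
    rw [Algebra.commutes r (t i), sub_self]
    exact zero_mem _
  | add a b _ _ iha ihb =>
    obtain ⟨a', ha', hta⟩ := iha
    obtain ⟨b', hb', htb⟩ := ihb
    refine ⟨a' + b', add_mem ha' hb', ?_⟩
    convert add_mem hta htb using 1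
    noncomm_ring
  | mul a b _ hb iha ihb =>
    obtain ⟨a', ha', hta⟩ := iha
    obtain ⟨b', hb', htb⟩ := ihb
    refine ⟨a' * b', mul_mem ha' hb', ?_⟩
    convert add_mem (mul_mem hta hb) (mul_mem ha' htb) using 1
    noncomm_ring

theorem hecke_mul_mem_heckeFiltration (hR : HeckeCliffordRel F z t) (i : ℕ) {y : A} {k : ℕ}
    (hy : y ∈ heckeFiltration F z t k) : t i * y ∈ heckeFiltration F z t (k + 1) := by
  refine map_heckeFiltration_mem (LinearMap.mulLeft F (t i)) (fun p hp w hw => ?_) hy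
  obtain ⟨p', hp', htp⟩ := hR.exists_hecke_mul i hp
  have hlead : p' * word t (i :: w) ∈ heckeFiltration F z t (k + 1) :=
    mem_heckeFiltration hp' (Nat.succ_lt_succ hw)
  have hrest := mem_heckeFiltration (t := t) htp (hw.trans k.lt_succ_self)
  convert add_mem hlead hrest using 1
  rw [LinearMap.mulLeft_apply, word_cons]
  noncomm_ring

theorem word_mul_mem_heckeFiltration (hR : HeckeCliffordRel F z t) (u : List ℕ) {p : A}
    (hp : p ∈ polyCliff F z) : word t u * p ∈ heckeFiltration F z t (u.length + 1) := by
  induction u with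
  | nil => simpa [word] using polyCliff_subset_heckeFiltration hp
  | cons a u ih =>
    rw [word_cons, mul_assoc]
    exact hR.hecke_mul_mem_heckeFiltration a ih

theorem mul_mem_heckeFiltration (hR : HeckeCliffordRel F z t) {k l m : ℕ} (hm : k + l ≤ m + 1)
    {x y : A} (hx : x ∈ heckeFiltration F z t k) (hy : y ∈ heckeFiltration F z t l) :
    x * y ∈ heckeFiltration F z t m := by
  refine map_heckeFiltration_mem (LinearMap.mulRight F y) (fun p hp u hu => ?_) hx
  refine map_heckeFiltration_mem (LinearMap.mulLeft F (p * word t u)) (fun p' hp' v hv => ?_) hy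
  have hassoc : p * word t u * (p' * word t v) = p * (word t u * p' * word t v) := by noncomm_ring
  rw [LinearMap.mulLeft_apply, hassoc]
  refine map_heckeFiltration_mem (LinearMap.mulLeft F p ∘ₗ LinearMap.mulRight F (word t v))
    (fun p'' hp'' w hw => ?_)
    (hR.word_mul_mem_heckeFiltration u hp')
  have hassoc' : p * (p'' * word t w * word t v) = p * p'' * word t (w ++ v) := by
    rw [word_append]; noncomm_ring
  rw [LinearMap.comp_apply, LinearMap.mulLeft_apply, LinearMap.mulRight_apply, hassoc']
  exact mem_heckeFiltration (mul_mem hp hp'') (by rw [List.length_append]; omega)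

theorem word_swap (hR : HeckeCliffordRel F z t) (u v : List ℕ) {a b : ℕ}
    (hab : a + 1 < b ∨ b + 1 < a) : word t (u ++ a :: b :: v) = word t (u ++ b :: a :: v) := by
  have hcomm : Commute (t a) (t b) := hab.elim (hR.hecke_far a b) fun h => (hR.hecke_far b a h).symm
  simp only [word_append, word_cons, ← mul_assoc (t a), ← mul_assoc (t b), hcomm.eq]

theorem word_braid (hR : HeckeCliffordRel F z t) (u v : List ℕ) (a : ℕ) :
    word t (u ++ a :: (a + 1) :: a :: v) = word t (u ++ (a + 1) :: a :: (a + 1) :: v) := by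
  simp only [word_append, word_cons, ← mul_assoc (t a), ← mul_assoc (t (a + 1)), hR.hecke_braid a]

theorem word_sq_mem_heckeFiltration (hR : HeckeCliffordRel F z t) (u v : List ℕ) (a : ℕ) :
    word t (u ++ a :: a :: v) ∈ heckeFiltration F z t (u ++ a :: a :: v).length := by
  have hlen : u.length + 1 + (v.length + 2) ≤ (u ++ a :: a :: v).length + 1 := by
    simp only [List.length_append, List.length_cons]
    omega
  rw [word_append, word_cons, word_cons, ← mul_assoc (t a)]
  exact hR.mul_mem_heckeFiltration hlen (word_mem_heckeFiltration u)
    (hR.mul_mem_heckeFiltration (by omega) (hR.hecke_sq a) (word_mem_heckeFiltration v))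

theorem exists_word_mul (hR : HeckeCliffordRel F z t) (u : List ℕ) {p : A}
    (hp : p ∈ polyCliff F z) : ∃ p' ∈ polyCliff F z,
      word t u * p - p' * word t u ∈ heckeFiltration F z t u.length := by
  induction u with
  | nil => exact ⟨p, hp, by simp [word]⟩
  | cons a u ih =>
    obtain ⟨p', hp', hup⟩ := ih
    obtain ⟨p'', hp'', hap⟩ := hR.exists_hecke_mul a hp'
    refine ⟨p'', hp'', ?_⟩
    rw [List.length_cons]
    convert add_mem (hR.hecke_mul_mem_heckeFiltration a hup)
      (mem_heckeFiltration hap u.length.lt_succ_self) using 1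
    rw [word_cons]
    noncomm_ring

theorem word_mul_letter (hR : HeckeCliffordRel F z t) {u v : List ℕ} {j : ℕ}
    (hu : ∀ i ∈ u, i < j) (hv : ∀ i ∈ v, j < i) (κ : LetterKind) :
    word t (u ++ j :: v) * z j κ - z (j + 1) κ * word t (u ++ j :: v) ∈
      heckeFiltration F z t (u ++ j :: v).length := by
  have hv' : Commute (z j κ) (word t v) := commute_word fun i hi =>
    (hR.hecke_letter_far i j κ (hv i hi).ne ((hv i hi).trans i.lt_succ_self).ne).symm
  have hu' : Commute (z (j + 1) κ) (word t u) := commute_word fun i hi =>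
    (hR.hecke_letter_far i (j + 1) κ (by have := hu i hi; omega)
      (by have := hu i hi; omega)).symm
  have hmem := hR.mul_mem_heckeFiltration (m := u.length + v.length + 1) (by omega)
    (hR.mul_mem_heckeFiltration (m := u.length + 1) (by omega) (word_mem_heckeFiltration u)
      (polyCliff_subset_heckeFiltration (hR.hecke_letter_lo j κ))) (word_mem_heckeFiltration v)
  rw [List.length_append, List.length_cons, ← add_assoc]
  convert hmem using 1
  rw [word_append, word_cons]
  calc word t u * (t j * word t v) * z j κ - z (j + 1) κ * (word t u * (t j * word t v))
      = word t u * t j * (word t v * z j κ) - z (j + 1) κ * word t u * t j * word t v := by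
        noncomm_ring
    _ = word t u * t j * (z j κ * word t v) - word t u * z (j + 1) κ * t j * word t v := by
        rw [hv'.eq, hu'.eq]
    _ = word t u * (t j * z j κ - z (j + 1) κ * t j) * word t v := by noncomm_ring

/-! ### Normal forms of words of letters -/

theorem letter_mul_letterWord (hR : HeckeCliffordRel F z t) {i : ℕ} {κ : LetterKind}
    {l : List (ℕ × LetterKind)} (hl : ∀ p ∈ l, i ≠ p.1) :
    z i κ * letterWord z l = (-1 : F) ^ (κ.degree * wordDegree l) • (letterWord z l * z i κ) := by
  induction l with
  | nil => simp [letterWord, wordDegree]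
  | cons p l ih =>
    rw [List.forall_mem_cons] at hl
    rw [letterWord_cons, ← mul_assoc, hR.letter_far i p.1 κ p.2 hl.1, smul_mul_assoc, mul_assoc,
      ih hl.2, mul_smul_comm, smul_smul, ← pow_add, wordDegree_cons, mul_add, mul_assoc]

theorem letterWord_mul_letterWord (hR : HeckeCliffordRel F z t) {l l' : List (ℕ × LetterKind)}
    (hl : ∀ p ∈ l, ∀ p' ∈ l', p.1 ≠ p'.1) : letterWord z l * letterWord z l' =
      (-1 : F) ^ (wordDegree l * wordDegree l') • (letterWord z l' * letterWord z l) := by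
  induction l with
  | nil => simp [letterWord, wordDegree]
  | cons p l ih =>
    rw [List.forall_mem_cons] at hl
    rw [letterWord_cons, mul_assoc, ih hl.2, mul_smul_comm, ← mul_assoc,
      hR.letter_mul_letterWord hl.1, smul_mul_assoc, smul_smul, ← pow_add, wordDegree_cons, add_mul,
      add_comm, mul_assoc]

theorem exists_letterWord_eq_filter (hR : HeckeCliffordRel F z t) (a : ℕ)
    (l : List (ℕ × LetterKind)) : ∃ e : F, letterWord z l =
      e • letterWord z (l.filter (·.1 < a) ++ l.filter (a ≤ ·.1)) := by
  induction l with
  | nil => exact ⟨1, by simp⟩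
  | cons p l ih =>
    obtain ⟨e, he⟩ := ih
    rcases lt_or_ge p.1 a with hp | hp
    · refine ⟨e, ?_⟩
      simp only [hp, hp.not_ge, List.filter_cons, decide_true, decide_false, if_true,
        Bool.false_eq_true, if_false, List.cons_append, letterWord_cons, he, mul_smul_comm]
    · have hmove := hR.letter_mul_letterWord (i := p.1) (κ := p.2) (l := l.filter (·.1 < a))
        fun p' hp' => (by simpa using (List.mem_filter.1 hp').2 : p'.1 < a).trans_le hp |>.ne'
      refine ⟨e * (-1) ^ (p.2.degree * wordDegree (l.filter (·.1 < a))), ?_⟩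
      simp only [hp, hp.not_gt, List.filter_cons, decide_true, decide_false, if_true,
        Bool.false_eq_true, if_false, letterWord_cons, letterWord_append, he, mul_smul_comm]
      rw [← mul_assoc, hmove, smul_mul_assoc, smul_smul, mul_assoc]

theorem exists_letter_swap (hR : HeckeCliffordRel F z t) (i j : ℕ) (κ κ' : LetterKind) :
    ∃ (e : F) (κ₁ κ₁' : LetterKind), z i κ * z j κ' = e • (z j κ₁' * z i κ₁) := by
  rcases eq_or_ne i j with rfl | hij
  · rcases κ with b | _ <;> rcases κ' with b' | _
    · exact ⟨1, .poly b, .poly b', by rw [one_smul, (hR.poly_poly i b b').eq]⟩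
    · exact ⟨1, .poly !b, .cliff, by rw [one_smul, hR.cliff_poly, Bool.not_not]⟩
    · exact ⟨1, .cliff, .poly !b', by rw [one_smul, hR.cliff_poly]⟩
    · exact ⟨1, .cliff, .cliff, by rw [one_smul]⟩
  · exact ⟨_, κ, κ', hR.letter_far i j κ κ' hij⟩

theorem exists_letter_mul_letterWord (hR : HeckeCliffordRel F z t) (i : ℕ) (κ : LetterKind)
    (l : List (ℕ × LetterKind)) :
    ∃ (e : F) (κ' : LetterKind) (l' : List (ℕ × LetterKind)),
      l'.map Prod.fst = l.map Prod.fst ∧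
        z i κ * letterWord z l = e • (letterWord z l' * z i κ') := by
  induction l generalizing κ with
  | nil => exact ⟨1, κ, [], rfl, by simp [letterWord]⟩
  | cons p l ih =>
    obtain ⟨e, κ₁, κ', hswap⟩ := hR.exists_letter_swap i p.1 κ p.2
    obtain ⟨e', κ₂, l', hpos, hmove⟩ := ih κ₁
    refine ⟨e * e', κ₂, (p.1, κ') :: l', by simp only [List.map_cons, hpos], ?_⟩
    rw [letterWord_cons, ← mul_assoc, hswap, smul_mul_assoc, mul_assoc, hmove, mul_smul_comm,
      smul_smul, letterWord_cons, mul_assoc]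

theorem exists_letterWord_move_last (hR : HeckeCliffordRel F z t) {p : ℕ × LetterKind}
    {l : List (ℕ × LetterKind)} (hp : p ∈ l) :
    ∃ (e : F) (κ : LetterKind) (l' : List (ℕ × LetterKind)),
      (l.map Prod.fst).sum = (l'.map Prod.fst).sum + p.1 ∧
        letterWord z l = e • (letterWord z l' * z p.1 κ) := by
  obtain ⟨u, v, rfl⟩ := List.append_of_mem hp
  obtain ⟨e, κ, v', hpos, hmove⟩ := hR.exists_letter_mul_letterWord p.1 p.2 v
  refine ⟨e, κ, u ++ v', ?_, ?_⟩
  · simp only [List.map_append, List.map_cons, List.sum_append, List.sum_cons, hpos]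
    ring
  · rw [letterWord_append, letterWord_cons, hmove, letterWord_append, mul_smul_comm, mul_assoc]

theorem exists_cliff_mul_polyWord (hR : HeckeCliffordRel F z t) (i : ℕ) (xs : List (ℕ × Bool)) :
    ∃ xs' : List (ℕ × Bool), xs'.map Prod.fst = xs.map Prod.fst ∧
      z i .cliff * letterWord z (normalWord xs []) =
        letterWord z (normalWord xs' []) * z i .cliff := by
  induction xs with
  | nil => exact ⟨[], rfl, by simp [normalWord, letterWord]⟩
  | cons p xs ih =>
    obtain ⟨xs', hpos, hmove⟩ := ih
    obtain ⟨b', hb'⟩ : ∃ b', z i .cliff * z p.1 (.poly p.2) = z p.1 (.poly b') * z i .cliff := by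
      rcases eq_or_ne i p.1 with rfl | hij
      · exact ⟨_, hR.cliff_poly p.1 p.2⟩
      · exact ⟨p.2, by simpa [degree] using hR.letter_far i p.1 .cliff (.poly p.2) hij⟩
    refine ⟨(p.1, b') :: xs', by simp only [List.map_cons, hpos], ?_⟩
    simp only [normalWord, List.map_cons, List.cons_append, letterWord_cons] at hmove ⊢
    rw [← mul_assoc, hb', mul_assoc, hmove, mul_assoc]

theorem exists_cliff_mul_sorted (hR : HeckeCliffordRel F z t) (i : ℕ) {cs : List ℕ}
    (hcs : cs.Pairwise (· < ·)) : ∃ (e : F) (cs' : List ℕ), cs'.Pairwise (· < ·) ∧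
      cs' ⊆ i :: cs ∧ z i .cliff * letterWord z (normalWord [] cs) =
        e • letterWord z (normalWord [] cs') := by
  induction cs with
  | nil => exact ⟨1, [i], by simp, by simp, by simp [normalWord, letterWord]⟩
  | cons j cs ih =>
    obtain ⟨hj, hcs'⟩ := List.pairwise_cons.1 hcs
    have hcons (k : ℕ) (l : List ℕ) : letterWord z (normalWord [] (k :: l)) =
        z k .cliff * letterWord z (normalWord [] l) := letterWord_cons _ _
    rcases lt_trichotomy i j with hij | rfl | hij
    · refine ⟨1, i :: j :: cs, hcs.cons fun k hk => ?_, by simp, by rw [one_smul, hcons i]⟩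
      rcases List.mem_cons.1 hk with rfl | hk
      exacts [hij, hij.trans (hj k hk)]
    · obtain ⟨e, he⟩ := hR.cliff_sq i
      refine ⟨e, cs, hcs', fun k hk => by simp [hk], ?_⟩
      rw [hcons, ← mul_assoc, he, smul_mul_assoc, one_mul]
    · obtain ⟨e, cs', hsorted, hsub, he⟩ := ih hcs'
      refine ⟨-e, j :: cs', hsorted.cons fun k hk => ?_, ?_, ?_⟩
      · rcases List.mem_cons.1 (hsub hk) with rfl | hk
        exacts [hij, hj k hk]
      · exact List.cons_subset.2 ⟨by simp,
          List.Subset.trans hsub (List.cons_subset_cons i (List.subset_cons_self j cs))⟩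
      · rw [hcons, hcons, ← mul_assoc, hR.letter_far i j _ _ hij.ne']
        simp [degree, mul_assoc, he]

theorem exists_normalWord (hR : HeckeCliffordRel F z t) (l : List (ℕ × LetterKind)) :
    ∃ (e : F) (xs : List (ℕ × Bool)) (cs : List ℕ), cs.Pairwise (· < ·) ∧
      (normalWord xs cs).map Prod.fst ⊆ l.map Prod.fst ∧
        letterWord z l = e • letterWord z (normalWord xs cs) := by
  have hsplit (xs cs) : letterWord z (normalWord xs cs) =
      letterWord z (normalWord xs []) * letterWord z (normalWord [] cs) := by
    simp [normalWord, letterWord_append]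
  induction l with
  | nil => exact ⟨1, [], [], .nil, by simp [normalWord], by simp [normalWord]⟩
  | cons p l ih =>
    obtain ⟨e, xs, cs, hcs, hsub, he⟩ := ih
    obtain ⟨i, b | _⟩ := p
    · refine ⟨e, (i, b) :: xs, cs, hcs, ?_, ?_⟩
      · exact List.cons_subset_cons i hsub
      · rw [letterWord_cons, he, mul_smul_comm]
        rfl
    · obtain ⟨xs', hpos, hmove⟩ := hR.exists_cliff_mul_polyWord i xs
      obtain ⟨e', cs', hcs', hsub', he'⟩ := hR.exists_cliff_mul_sorted i hcs
      refine ⟨e * e', xs', cs', hcs', ?_, ?_⟩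
      · rw [map_fst_normalWord, List.append_subset] at hsub ⊢
        rw [hpos]
        exact ⟨List.Subset.trans hsub.1 (List.subset_cons_self _ _),
          List.Subset.trans hsub' (List.cons_subset_cons i hsub.2)⟩
      · rw [letterWord_cons, he, hsplit, mul_smul_comm, ← mul_assoc, hmove, mul_assoc, he',
          mul_smul_comm, smul_smul, ← hsplit]

end HeckeCliffordRel

theorem eq_zero_of_eq_neg {F : Type*} [Ring F] [NoZeroDivisors F] (h2 : (2 : F) ≠ 0) {r : F}
    (h : r = -r) : r = 0 := by
  rw [eq_neg_iff_add_eq_zero, ← two_mul] at h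
  exact (mul_eq_zero.1 h).resolve_left h2

/-- A trace form `g` on a Hecke-Clifford algebra, invariant under an automorphism `δ` which negates
the Clifford letters, and anti-invariant under an antiautomorphism `τ` which fixes the polynomial
letters and, up to terms without Hecke generators, the Hecke generators. -/
structure IsAntiTrace {F A : Type*} [CommRing F] [Ring A] [Algebra F A] (z : ℕ → LetterKind → A)
    (t : ℕ → A) (δ : A →ₐ[F] A) (τ : A →ₗ[F] A) (g : A →ₗ[F] F) : Prop where
  trace_mul_comm : ∀ a b, g (a * b) = g (b * a)
  δ_letter : ∀ i κ, δ (z i κ) = (-1 : F) ^ κ.degree • z i κ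
  δ_hecke : ∀ i, δ (t i) = t i
  trace_δ : ∀ a, g (δ a) = g a
  τ_mul : ∀ a b, τ (a * b) = τ b * τ a
  τ_one : τ 1 = 1
  τ_poly : ∀ i b, τ (z i (.poly b)) = z i (.poly b)
  τ_hecke : ∀ i, τ (t i) - t i ∈ polyCliff F z
  trace_τ : ∀ a, g (τ a) = -g a

namespace HeckeCliffordRel

open LetterKind

variable {F A : Type*} [CommRing F] [Ring A] [Algebra F A] {z : ℕ → LetterKind → A} {t : ℕ → A}
  {g : A →ₗ[F] F} {δ : A →ₐ[F] A} {τ : A →ₗ[F] A}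

/-! ### Vanishing of anti-invariant traces -/

theorem trace_move_head (hR : HeckeCliffordRel F z t) (hg : ∀ a b, g (a * b) = g (b * a))
    {a : ℕ} {w : List ℕ} {y : A} (hw : (a :: w).Pairwise (· < ·))
    (hy : ∀ i ∈ w, ∀ j ∈ a :: w, i = j + 1 → Commute y (t i)) :
    g (y * t a * word t w) = g (y * word t w * t a) := by
  induction w generalizing a y with
  | nil => simp [word]
  | cons b w ih =>
    obtain ⟨ha, hbw⟩ := List.pairwise_cons.1 hw
    obtain ⟨hb, -⟩ := List.pairwise_cons.1 hbw
    have hab : a < b := ha b List.mem_cons_self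
    have hfar (i : ℕ) (hi : i ∈ w) : Commute (t a) (t i) :=
      hR.hecke_far a i (Nat.lt_of_le_of_lt hab (hb i hi))
    have hcomm : Commute (t a) (word t w) := commute_word hfar
    rcases (Nat.succ_le_of_lt hab).eq_or_lt with rfl | hlt
    · have hyb : Commute y (t (a + 1)) := hy _ List.mem_cons_self a List.mem_cons_self rfl
      have hmove := ih (y := y * t a) hbw fun i hi j hj hij =>
        (hy i (List.mem_cons_of_mem _ hi) j (List.mem_cons_of_mem _ hj) hij).mul_left (hfar i hi)
      calc g (y * t a * word t ((a + 1) :: w))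
          = g (y * t a * t (a + 1) * word t w) := by rw [word_cons, ← mul_assoc]
        _ = g (y * t a * word t w * t (a + 1)) := hmove
        _ = g (t (a + 1) * (y * t a * word t w)) := hg _ _
        _ = g (t (a + 1) * y * (t a * word t w)) := by simp only [mul_assoc]
        _ = g (y * t (a + 1) * (word t w * t a)) := by rw [hyb.eq, hcomm.eq]
        _ = g (y * word t ((a + 1) :: w) * t a) := by simp only [word_cons, mul_assoc]
    · rw [word_cons, mul_assoc, mul_assoc, ((hR.hecke_far a b hlt).mul_right hcomm).eq]

theorem trace_reverse (hR : HeckeCliffordRel F z t) (hg : ∀ a b, g (a * b) = g (b * a))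
    {w : List ℕ} {y : A} (hw : w.Pairwise (· < ·))
    (hy : ∀ i ∈ w, ∀ j ∈ w, i = j + 1 → Commute y (t i)) :
    g (y * word t w) = g (y * word t w.reverse) := by
  induction w generalizing y with
  | nil => rfl
  | cons a w ih =>
    have hrev := ih (y := t a * y) hw.of_cons fun i hi j hj hij =>
      .mul_left (hR.hecke_far a i (hij ▸ Nat.succ_lt_succ (List.rel_of_pairwise_cons hw hj)))
        (hy i (List.mem_cons_of_mem _ hi) j (List.mem_cons_of_mem _ hj) hij)
    calc g (y * word t (a :: w)) = g (y * t a * word t w) := by rw [word_cons, ← mul_assoc]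
      _ = g (y * word t w * t a) :=
        hR.trace_move_head hg hw fun i hi => hy i (List.mem_cons_of_mem _ hi)
      _ = g (t a * y * word t w) := by rw [hg, mul_assoc]
      _ = g (t a * y * word t w.reverse) := hrev
      _ = g (y * word t w.reverse * t a) := by rw [mul_assoc, hg]
      _ = g (y * word t (a :: w).reverse) := by
        rw [List.reverse_cons, word_append, word_singleton, mul_assoc]

theorem trace_letter_shift (hR : HeckeCliffordRel F z t) (hg : ∀ a b, g (a * b) = g (b * a))
    {w : List ℕ} (hw : w.Pairwise (· < ·)) (hlow : ∀ y ∈ heckeFiltration F z t w.length, g y = 0)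
    {j : ℕ} (hj : j ∈ w) {p : A} (hp : p ∈ polyCliff F z) (κ : LetterKind) :
    g (p * z (j + 1) κ * word t w) = g (z j κ * p * word t w) := by
  obtain ⟨u, v, rfl⟩ := List.append_of_mem hj
  obtain ⟨-, hv, huv⟩ := List.pairwise_append.1 hw
  have hmem := hR.word_mul_letter (fun i hi => huv i hi j List.mem_cons_self)
    (fun i hi => List.rel_of_pairwise_cons hv hi) κ
  have hzero := hlow _ (hR.mul_mem_heckeFiltration (by omega)
    (polyCliff_subset_heckeFiltration hp) hmem)
  rw [mul_sub, map_sub, sub_eq_zero] at hzero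
  rw [mul_assoc, ← hzero, ← mul_assoc, hg, mul_assoc (z j κ)]

theorem τ_polyWord (hR : HeckeCliffordRel F z t) (hg : IsAntiTrace z t δ τ g)
    (xs : List (ℕ × Bool)) :
    τ (letterWord z (normalWord xs [])) = letterWord z (normalWord xs []) := by
  induction xs with
  | nil => exact hg.τ_one
  | cons p xs ih =>
    have hcomm : Commute (z p.1 (.poly p.2)) (letterWord z (normalWord xs [])) := by
      refine commute_letterWord fun q hq => ?_
      obtain ⟨⟨i, b⟩, -, rfl⟩ : ∃ r ∈ xs, (r.1, LetterKind.poly r.2) = q := by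
        simpa [normalWord] using hq
      rcases eq_or_ne p.1 i with rfl | hne
      · exact hR.poly_poly _ _ _
      · simpa [degree, Commute, SemiconjBy] using hR.letter_far p.1 i (.poly p.2) (.poly b) hne
    have hcons : letterWord z (normalWord (p :: xs) []) =
        z p.1 (.poly p.2) * letterWord z (normalWord xs []) := letterWord_cons _ _
    rw [hcons, hg.τ_mul, ih, hg.τ_poly, hcomm.eq]

theorem τ_word (hR : HeckeCliffordRel F z t) (hg : IsAntiTrace z t δ τ g) (w : List ℕ) :
    τ (word t w) - word t w.reverse ∈ heckeFiltration F z t w.length := by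
  induction w with
  | nil => simp [word, hg.τ_one]
  | cons a w ih =>
    have hτ := polyCliff_subset_heckeFiltration (t := t) (hg.τ_hecke a)
    have hta : t a ∈ heckeFiltration F z t 2 := by
      simpa [word] using word_mem_heckeFiltration (F := F) (z := z) (t := t) [a]
    have hrev : word t w.reverse ∈ heckeFiltration F z t (w.length + 1) := by
      simpa using word_mem_heckeFiltration (F := F) (z := z) (t := t) w.reverse
    have hmem := add_mem (add_mem
      (hR.mul_mem_heckeFiltration (m := w.length + 1) (by omega) ih hta)
      (hR.mul_mem_heckeFiltration (m := w.length + 1) (by omega) ih hτ))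
      (hR.mul_mem_heckeFiltration (m := w.length + 1) (by omega) hrev hτ)
    rw [word_cons, hg.τ_mul, List.reverse_cons, word_append, word_singleton, List.length_cons]
    convert hmem using 1
    noncomm_ring

theorem trace_eq_zero_of_odd_wordDegree [NoZeroDivisors F] (h2 : (2 : F) ≠ 0)
    (hg : IsAntiTrace z t δ τ g) {l : List (ℕ × LetterKind)} (hl : Odd (wordDegree l))
    (w : List ℕ) : g (letterWord z l * word t w) = 0 := by
  have hδl (l) : δ (letterWord z l) = (-1 : F) ^ wordDegree l • letterWord z l := by
    induction l with
    | nil => simp [letterWord, wordDegree]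
    | cons p l ih =>
      rw [letterWord_cons, map_mul, hg.δ_letter, ih, wordDegree_cons, pow_add,
        smul_mul_smul_comm]
  have hδw : δ (word t w) = word t w := by
    rw [word, map_list_prod, List.map_map]
    exact congrArg List.prod (List.map_congr_left fun i _ => hg.δ_hecke i)
  refine eq_zero_of_eq_neg h2 ?_
  rw [← map_neg, ← hg.trace_δ, map_mul, hδl, hδw, hl.neg_one_pow, neg_one_smul, neg_mul]

theorem trace_eq_zero_of_odd_mul_odd [NoZeroDivisors F] (h2 : (2 : F) ≠ 0)
    (hR : HeckeCliffordRel F z t) (hg : ∀ a b, g (a * b) = g (b * a)) {a : ℕ}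
    {l₁ l₂ : List (ℕ × LetterKind)} {w₁ w₂ : List ℕ} (hl₁ : ∀ p ∈ l₁, p.1 < a)
    (hl₂ : ∀ p ∈ l₂, a ≤ p.1) (hw₁ : ∀ i ∈ w₁, i + 1 < a) (hw₂ : ∀ i ∈ w₂, a ≤ i)
    (hodd₁ : Odd (wordDegree l₁)) (hodd₂ : Odd (wordDegree l₂)) :
    g (letterWord z (l₁ ++ l₂) * word t (w₁ ++ w₂)) = 0 := by
  have hww : Commute (word t w₁) (word t w₂) := commute_word fun i hi =>
    (commute_word fun j hj => (hR.hecke_far j i ((hw₁ j hj).trans_le (hw₂ i hi))).symm).symm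
  have hlw₂ : Commute (letterWord z l₂) (word t w₁) := commute_word fun i hi =>
    (commute_letterWord fun p hp => hR.hecke_letter_far i p.1 p.2
      (by have := hw₁ i hi; have := hl₂ p hp; omega)
      (by have := hw₁ i hi; have := hl₂ p hp; omega)).symm
  have hlw₁ : Commute (letterWord z l₁) (word t w₂) := commute_word fun i hi =>
    (commute_letterWord fun p hp => hR.hecke_letter_far i p.1 p.2
      (by have := hw₂ i hi; have := hl₁ p hp; omega)
      (by have := hw₂ i hi; have := hl₁ p hp; omega)).symm
  have hll : letterWord z l₂ * letterWord z l₁ = -(letterWord z l₁ * letterWord z l₂) := by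
    rw [hR.letterWord_mul_letterWord fun p hp q hq => ((hl₁ q hq).trans_le (hl₂ p hp)).ne',
      (hodd₂.mul hodd₁).neg_one_pow, neg_one_smul]
  refine eq_zero_of_eq_neg h2 ?_
  rw [letterWord_append, word_append]
  calc g (letterWord z l₁ * letterWord z l₂ * (word t w₁ * word t w₂))
      = g (letterWord z l₁ * word t w₁ * (letterWord z l₂ * word t w₂)) := by
        rw [mul_assoc, ← mul_assoc (letterWord z l₂), hlw₂.eq]; simp only [mul_assoc]
    _ = g (letterWord z l₂ * word t w₂ * (letterWord z l₁ * word t w₁)) := hg _ _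
    _ = g (letterWord z l₂ * letterWord z l₁ * (word t w₁ * word t w₂)) := by
        rw [mul_assoc, ← mul_assoc (word t w₂), ← hlw₁.eq, hww.eq]; simp only [mul_assoc]
    _ = -g (letterWord z l₁ * letterWord z l₂ * (word t w₁ * word t w₂)) := by
        rw [hll, neg_mul, map_neg]

theorem trace_polyWord_eq_zero [NoZeroDivisors F] (h2 : (2 : F) ≠ 0) (hR : HeckeCliffordRel F z t)
    (hg : IsAntiTrace z t δ τ g) {w : List ℕ} (hw : w.Pairwise (· < ·))
    (hlow : ∀ y ∈ heckeFiltration F z t w.length, g y = 0) {xs : List (ℕ × Bool)}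
    (hxs : ∀ p ∈ xs, ∀ j ∈ w, p.1 ≠ j + 1) :
    g (letterWord z (normalWord xs []) * word t w) = 0 := by
  have hzero := hlow _ (hR.mul_mem_heckeFiltration (by omega)
    (polyCliff_subset_heckeFiltration (letterWord_mem_polyCliff (normalWord xs [])))
    (hR.τ_word hg w))
  rw [mul_sub, map_sub, sub_eq_zero] at hzero
  refine eq_zero_of_eq_neg h2 ?_
  rw [← hg.trace_τ, hg.τ_mul, hR.τ_polyWord hg, hg.trace_mul_comm (τ _), hzero]
  refine hR.trace_reverse hg.trace_mul_comm hw fun i hi j hj hij =>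
    (commute_letterWord fun q hq => ?_).symm
  obtain ⟨⟨k, b⟩, hk, rfl⟩ : ∃ r ∈ xs, (r.1, LetterKind.poly r.2) = q := by
    simpa [normalWord] using hq
  exact hR.hecke_letter_far i k _ (hij ▸ hxs _ hk j hj) (hxs _ hk i hi)

theorem trace_normalWord_eq_zero [NoZeroDivisors F] (h2 : (2 : F) ≠ 0) (hR : HeckeCliffordRel F z t)
    (hg : IsAntiTrace z t δ τ g) {w : List ℕ} (hw : w.Pairwise (· < ·))
    (hlow : ∀ y ∈ heckeFiltration F z t w.length, g y = 0) {xs : List (ℕ × Bool)} {cs : List ℕ}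
    (hcs : cs.Pairwise (· < ·)) (hpos : ∀ i ∈ (normalWord xs cs).map Prod.fst, ∀ j ∈ w, i ≠ j + 1) :
    g (letterWord z (normalWord xs cs) * word t w) = 0 := by
  rw [map_fst_normalWord, List.forall_mem_append, List.forall_mem_map] at hpos
  obtain ⟨hxs, hcw⟩ := hpos
  obtain rfl | ⟨cs, a, rfl⟩ := cs.eq_nil_or_concat
  · exact hR.trace_polyWord_eq_zero h2 hg hw hlow hxs
  rw [List.concat_eq_append] at *
  rcases Nat.even_or_odd cs.length with heven | hodd
  · refine trace_eq_zero_of_odd_wordDegree h2 hg ?_ w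
    rw [wordDegree_normalWord, List.length_append]
    exact heven.add_one
  -- The last Clifford letter and the remaining ones, an odd number, form two anticommuting factors.
  have hlt : ∀ i ∈ cs, i < a := fun i hi => (List.pairwise_append.1 hcs).2.2 i hi a (by simp)
  have hlt' : cs.filter (· < a) = cs := List.filter_eq_self.2 (by simpa using hlt)
  have hge' : cs.filter (a ≤ ·) = [] := List.filter_eq_nil_iff.2 (by simpa using hlt)
  have hsplit : w = w.filter (· < a) ++ w.filter (a ≤ ·) := by
    refine List.Perm.eq_of_pairwise' (r := (· < ·)) hw ?_ ?_
    · exact List.pairwise_append.2 ⟨hw.filter _, hw.filter _, fun i hi j hj => by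
        simp only [List.mem_filter, decide_eq_true_eq] at hi hj; omega⟩
    · simpa [← decide_not] using (List.filter_append_perm (· < a) w).symm
  obtain ⟨e, he⟩ := hR.exists_letterWord_eq_filter a (normalWord xs (cs ++ [a]))
  rw [he, hsplit, smul_mul_assoc, map_smul, hR.trace_eq_zero_of_odd_mul_odd (a := a) h2
    hg.trace_mul_comm, smul_zero]
  · simp
  · simp
  · intro i hi
    simp only [List.mem_filter, decide_eq_true_eq] at hi
    exact lt_of_le_of_ne hi.2 (hcw a (by simp) i hi.1).symm
  · simp
  · rw [filter_normalWord (· < a), wordDegree_normalWord]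
    simpa [hlt'] using hodd
  · rw [filter_normalWord (a ≤ ·), wordDegree_normalWord]
    simp [hge']

theorem trace_letterWord_eq_zero [NoZeroDivisors F] (h2 : (2 : F) ≠ 0) (hR : HeckeCliffordRel F z t)
    (hg : IsAntiTrace z t δ τ g) {w : List ℕ} (hw : w.Pairwise (· < ·))
    (hlow : ∀ y ∈ heckeFiltration F z t w.length, g y = 0) (l : List (ℕ × LetterKind)) :
    g (letterWord z l * word t w) = 0 := by
  induction hN : (l.map Prod.fst).sum using Nat.strong_induction_on generalizing l with
  | _ N ih =>
  by_cases hex : ∃ p ∈ l, ∃ j ∈ w, p.1 = j + 1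
  · obtain ⟨⟨_, κ⟩, hp, j, hj, rfl⟩ := hex
    obtain ⟨e, κ', l', hsum, he⟩ := hR.exists_letterWord_move_last hp
    rw [he, smul_mul_assoc, map_smul, hR.trace_letter_shift hg.trace_mul_comm hw hlow hj
      (letterWord_mem_polyCliff l'), ← letterWord_cons (j, κ'), ih _ ?_ _ rfl, smul_zero]
    simp only [List.map_cons, List.sum_cons]
    omega
  · push Not at hex
    obtain ⟨e, xs, cs, hcs, hpos, he⟩ := hR.exists_normalWord l
    rw [he, smul_mul_assoc, map_smul, hR.trace_normalWord_eq_zero h2 hg hw hlow hcs, smul_zero]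
    intro i hi
    obtain ⟨p, hp, rfl⟩ := List.mem_map.1 (hpos hi)
    exact hex p hp

theorem cyclicBraidInvariant_trace_eq_zero [NoZeroDivisors F] (h2 : (2 : F) ≠ 0)
    (hR : HeckeCliffordRel F z t) (hg : IsAntiTrace z t δ τ g) {k : ℕ}
    (hlow : ∀ y ∈ heckeFiltration F z t k, g y = 0) :
    CyclicBraidInvariant fun w => w.length = k → ∀ p ∈ polyCliff F z, g (p * word t w) = 0 where
  comm u v a b hab h := by
    rw [hR.word_swap u v hab]
    simpa using h
  braid u v a h := by
    rw [← hR.word_braid u v a]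
    simpa using h
  sq u v a hlen p hp :=
    hlow _ <| hR.mul_mem_heckeFiltration (by omega) (polyCliff_subset_heckeFiltration hp)
      (hlen ▸ hR.word_sq_mem_heckeFiltration u v a)
  rotate u a h hlen p hp := by
    rw [List.length_cons] at hlen
    obtain ⟨p', hp', hup⟩ := hR.exists_word_mul u hp
    have hzero := hlow _ (hR.mul_mem_heckeFiltration (by rw [List.length_singleton]; omega) hup
      (word_mem_heckeFiltration [a]))
    rw [sub_mul, map_sub, sub_eq_zero, word_singleton] at hzero
    rw [word_cons, ← mul_assoc, hg.trace_mul_comm, ← mul_assoc, hzero, mul_assoc,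
      ← word_singleton (t := t), ← word_append]
    exact h (by simpa using hlen) p' hp'
  increasing w hw hlen p hp :=
    polyCliff_le_of_letterWord_mem (N := LinearMap.ker (g ∘ₗ LinearMap.mulRight F (word t w)))
      (hR.trace_letterWord_eq_zero h2 hg hw (hlen ▸ hlow)) hp

theorem trace_eq_zero [NoZeroDivisors F] (h2 : (2 : F) ≠ 0) (hR : HeckeCliffordRel F z t)
    (hg : IsAntiTrace z t δ τ g) (w : List ℕ) :
    ∀ p ∈ polyCliff F z, g (p * word t w) = 0 := by
  induction hk : w.length using Nat.strong_induction_on generalizing w with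
  | _ k ih =>
  have hlow : ∀ y ∈ heckeFiltration F z t k, g y = 0 := fun y hy =>
    map_heckeFiltration_mem g (N := ⊥) (fun p hp w hw => ih _ hw w rfl p hp) hy
  exact (hR.cyclicBraidInvariant_trace_eq_zero h2 hg hlow).holds w hk

theorem trace_eq_zero_of_mem_heckeFiltration [NoZeroDivisors F] (h2 : (2 : F) ≠ 0)
    (hR : HeckeCliffordRel F z t) (hg : IsAntiTrace z t δ τ g) {k : ℕ} {y : A}
    (hy : y ∈ heckeFiltration F z t k) : g y = 0 :=
  map_heckeFiltration_mem g (N := ⊥) (fun p hp w _ => hR.trace_eq_zero h2 hg w p hp) hy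

end HeckeCliffordRel

/-! ### The relations between Hecke generators and neighbouring letters -/

section CrossRelations

variable {F A : Type*} [CommRing F] [Ring A] [Algebra F A] {ξ : F} {t c c' x x' y y' : A}

theorem sub_smul_one_mul_self (htt : t * t = ξ • t + 1) : (t - ξ • 1) * t = 1 := by
  rw [sub_mul, htt, smul_one_mul, add_sub_cancel_left]

theorem self_mul_sub_smul_one (htt : t * t = ξ • t + 1) : t * (t - ξ • 1) = 1 := by
  rw [mul_sub, htt, mul_smul_one, add_sub_cancel_left]

theorem hecke_mul_cliff_hi (htt : t * t = ξ • t + 1) (htc : t * c = c' * t) :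
    t * c' - c * t = ξ • (c' - c) := by
  have hinv : c * (t - ξ • 1) = (t - ξ • 1) * c' := by
    calc c * (t - ξ • 1) = (t - ξ • 1) * (t * c) * (t - ξ • 1) := by
          rw [← mul_assoc (t - ξ • 1), sub_smul_one_mul_self htt, one_mul]
      _ = (t - ξ • 1) * c' := by
          rw [htc, mul_assoc, mul_assoc, self_mul_sub_smul_one htt, mul_one]
  rw [mul_sub, sub_mul, mul_smul_one, smul_one_mul, sub_eq_sub_iff_add_eq_add] at hinv
  rw [smul_sub, sub_eq_sub_iff_add_eq_add, add_comm (ξ • c'), hinv]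

theorem hecke_mul_poly_lo (htt : t * t = ξ • t + 1)
    (hcross : (t + ξ • (c * c')) * x * t = x') :
    t * x - x' * t = -(ξ • x') - ξ • (c * c' * x) := by
  have hinv : x' * (t - ξ • 1) = (t + ξ • (c * c')) * x := by
    rw [← hcross, mul_assoc, self_mul_sub_smul_one htt, mul_one]
  rw [mul_sub, mul_smul_one, add_mul, smul_mul_assoc] at hinv
  rw [eq_sub_of_add_eq hinv.symm]
  abel

/-- The element `t + ξ c c'` is the image of `t` under the antiautomorphism `τ`, so it satisfies the
same quadratic relation. -/
theorem hecke_add_cliff_mul_self (htt : t * t = ξ • t + 1) (htc : t * c = c' * t)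
    (hc : c * c = 1) (hc' : c' * c' = 1) (hcc' : c * c' = -(c' * c)) :
    (t + ξ • (c * c')) * (t + ξ • (c * c')) = ξ • (t + ξ • (c * c')) + 1 := by
  have hcomm : t * (c * c') = ξ • 1 + ξ • (c * c') - c * c' * t := by
    calc t * (c * c') = c' * (t * c') := by rw [← mul_assoc, htc, mul_assoc]
      _ = c' * (c * t) + ξ • (c' * c' - c' * c) := by
        rw [eq_add_of_sub_eq' (hecke_mul_cliff_hi htt htc), mul_add, mul_smul_comm, mul_sub]
      _ = ξ • 1 + ξ • (c * c') - c * c' * t := by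
        rw [hc', ← mul_assoc, ← neg_eq_iff_eq_neg.2 hcc', neg_mul]; module
  have hsq : c * c' * (c * c') = -1 := by
    calc c * c' * (c * c') = -(c * (c' * c') * c) := by
          nth_rewrite 2 [hcc']; noncomm_ring
      _ = -1 := by rw [hc', mul_one, hc]
  simp only [add_mul, mul_add, smul_mul_assoc, mul_smul_comm, htt, hcomm, hsq]
  module

theorem hecke_mul_poly_hi (htt : t * t = ξ • t + 1) (htc : t * c = c' * t) (hc : c * c = 1)
    (hc' : c' * c' = 1) (hcc' : c * c' = -(c' * c)) (hcross : (t + ξ • (c * c')) * x * t = x') :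
    t * x' - x * t = ξ • x' - ξ • (c * c' * x') := by
  have hinv : x * t = (t + ξ • (c * c') - ξ • 1) * x' := by
    rw [← hcross, mul_assoc, ← mul_assoc,
      sub_smul_one_mul_self (hecke_add_cliff_mul_self htt htc hc hc' hcc'), one_mul]
  rw [hinv, sub_mul, add_mul, smul_one_mul, smul_mul_assoc]
  abel

theorem hecke_mul_inv_mem {S : Subalgebra F A} (hxy : x * y = 1) (hy' : y' * x' = 1) (hyS : y ∈ S)
    (hyS' : y' ∈ S) (h : t * x - x' * t ∈ S) : t * y - y' * t ∈ S := by
  have hconj : y' * (t * x - x' * t) * y = -(t * y - y' * t) := by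
    calc y' * (t * x - x' * t) * y = y' * t * (x * y) - y' * x' * t * y := by noncomm_ring
      _ = -(t * y - y' * t) := by rw [hxy, hy']; noncomm_ring
  rw [← neg_neg (t * y - y' * t), ← hconj]
  exact neg_mem (mul_mem (mul_mem hyS' h) hyS)

end CrossRelations

/-! ### The affine Hecke-Clifford algebra -/

section Letters

variable {F : Type} [Field F] {q : F} {n : ℕ}

/-- The generators `X_i`, `X_i⁻¹` and `C_i`, indexed by their kind. -/
noncomputable def letterGen (q : F) (i : Fin n) : LetterKind → H F q n
  | .poly false => X F q i
  | .poly true => Xinv F q i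
  | .cliff => C F q i

/-- The generators `X_k`, `X_k⁻¹` and `C_k`, indexed by all natural numbers and zero out of
range. -/
noncomputable def letter (q : F) (n k : ℕ) (κ : LetterKind) : H F q n :=
  if h : k < n then letterGen q ⟨k, h⟩ κ else 0

/-- The generators `T_k`, indexed by all natural numbers and zero out of range. -/
noncomputable def heckeLetter (q : F) (n k : ℕ) : H F q n :=
  if h : k < n - 1 then T F q ⟨k, h⟩ else 0

theorem mkAlgHom_eq_of_rel {a b : FA F n} (h : Rel F q n a b) :
    RingQuot.mkAlgHom F (Rel F q n) a = RingQuot.mkAlgHom F (Rel F q n) b :=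
  RingQuot.mkAlgHom_rel F h

theorem commute_of_rel {a b : FA F n} (h : Rel F q n (a * b) (b * a)) :
    Commute (RingQuot.mkAlgHom F (Rel F q n) a) (RingQuot.mkAlgHom F (Rel F q n) b) := by
  rw [Commute, SemiconjBy, ← map_mul, ← map_mul]
  exact mkAlgHom_eq_of_rel h

theorem Xinv_mul_X (i : Fin n) : Xinv F q i * X F q i = 1 := by
  simpa [X, Xinv] using mkAlgHom_eq_of_rel (Rel.XinvX (q := q) i)

theorem X_mul_Xinv (i : Fin n) : X F q i * Xinv F q i = 1 := by
  simpa [X, Xinv] using mkAlgHom_eq_of_rel (Rel.XXinv (q := q) i)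

theorem C_mul_self (i : Fin n) : C F q i * C F q i = 1 := by
  simpa [C] using mkAlgHom_eq_of_rel (Rel.CC (q := q) i)

theorem C_anticomm {i j : Fin n} (h : i ≠ j) : C F q i * C F q j = -(C F q j * C F q i) := by
  simpa [C] using mkAlgHom_eq_of_rel (Rel.Canti (q := q) i j h)

theorem C_lo_anticomm (i : Fin (n - 1)) :
    C F q (lo i) * C F q (hi i) = -(C F q (hi i) * C F q (lo i)) :=
  C_anticomm (by simp [lo, hi])

theorem T_mul_self (i : Fin (n - 1)) : T F q i * T F q i = (q - q⁻¹) • T F q i + 1 := by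
  simpa only [T, map_mul, map_add, map_smul, map_one] using
    mkAlgHom_eq_of_rel (Rel.Tquad (q := q) i)

theorem T_mul_C_lo (i : Fin (n - 1)) : T F q i * C F q (lo i) = C F q (hi i) * T F q i := by
  simpa [T, C] using mkAlgHom_eq_of_rel (Rel.TC (q := q) i)

theorem T_cross (i : Fin (n - 1)) :
    (T F q i + (q - q⁻¹) • (C F q (lo i) * C F q (hi i))) * X F q (lo i) * T F q i =
      X F q (hi i) := by
  simpa only [T, C, X, map_mul, map_add, map_smul] using mkAlgHom_eq_of_rel (Rel.cross (q := q) i)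

theorem C_mul_X (i : Fin n) : C F q i * X F q i = Xinv F q i * C F q i := by
  simpa [C, X, Xinv] using mkAlgHom_eq_of_rel (Rel.CX (q := q) i)

theorem C_mul_Xinv (i : Fin n) : C F q i * Xinv F q i = X F q i * C F q i := by
  simpa [C, X, Xinv] using mkAlgHom_eq_of_rel (Rel.CXi (q := q) i)

theorem letterGen_far {i j : Fin n} (h : i ≠ j) (κ κ' : LetterKind) :
    letterGen q i κ * letterGen q j κ' =
      (-1 : F) ^ (κ.degree * κ'.degree) • (letterGen q j κ' * letterGen q i κ) := by
  match κ, κ' with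
  | .cliff, .cliff =>
    simp only [LetterKind.degree, mul_one, pow_one]
    exact (C_anticomm h).trans (neg_one_smul F _).symm
  | .poly b, .poly b' =>
    simp only [LetterKind.degree, mul_zero, pow_zero, one_smul]
    match b, b' with
    | false, false => exact commute_of_rel (Rel.XX i j)
    | true, true => exact commute_of_rel (Rel.XiXi i j)
    | false, true => exact commute_of_rel (Rel.XXi i j h)
    | true, false => exact (commute_of_rel (Rel.XXi j i h.symm)).symm
  | .cliff, .poly b =>
    simp only [LetterKind.degree, mul_zero, pow_zero, one_smul]
    cases b
    exacts [commute_of_rel (Rel.CXo i j h), commute_of_rel (Rel.CXio i j h)]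
  | .poly b, .cliff =>
    simp only [LetterKind.degree, zero_mul, pow_zero, one_smul]
    cases b
    exacts [(commute_of_rel (Rel.CXo j i h.symm)).symm, (commute_of_rel (Rel.CXio j i h.symm)).symm]

theorem letterGen_poly_commute (i : Fin n) (b b' : Bool) :
    Commute (letterGen q i (.poly b)) (letterGen q i (.poly b')) := by
  have hX : Commute (X F q i) (Xinv F q i) := (X_mul_Xinv i).trans (Xinv_mul_X i).symm
  cases b <;> cases b'
  exacts [.refl _, hX, hX.symm, .refl _]

theorem C_mul_letterGen_poly (i : Fin n) (b : Bool) :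
    C F q i * letterGen q i (.poly b) = letterGen q i (.poly !b) * C F q i := by
  cases b
  exacts [C_mul_X i, C_mul_Xinv i]

theorem T_commute_letterGen {i : Fin (n - 1)} {j : Fin n} (hlo : j ≠ lo i) (hhi : j ≠ hi i)
    (κ : LetterKind) : Commute (T F q i) (letterGen q j κ) :=
  match κ with
  | .poly false => commute_of_rel (Rel.TXo i j hlo hhi)
  | .poly true => commute_of_rel (Rel.TXio i j hlo hhi)
  | .cliff => commute_of_rel (Rel.TCo i j hlo hhi)

theorem letterGen_mem_polyCliff (i : Fin n) (κ : LetterKind) :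
    letterGen q i κ ∈ polyCliff F (letter q n) := by
  have hmem := letter_mem_polyCliff (z := letter q n) F i κ
  rwa [letter, dif_pos i.isLt] at hmem

theorem smul_C_mul_C_mem_polyCliff (r : F) (i j : Fin n) :
    r • (C F q i * C F q j) ∈ polyCliff F (letter q n) :=
  Subalgebra.smul_mem _
    (mul_mem (letterGen_mem_polyCliff i .cliff) (letterGen_mem_polyCliff j .cliff)) r

theorem T_mul_letterGen_lo (i : Fin (n - 1)) (κ : LetterKind) :
    T F q i * letterGen q (lo i) κ - letterGen q (hi i) κ * T F q i ∈ polyCliff F (letter q n) := by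
  have hX : T F q i * X F q (lo i) - X F q (hi i) * T F q i ∈ polyCliff F (letter q n) := by
    rw [hecke_mul_poly_lo (T_mul_self i) (T_cross i), ← smul_mul_assoc]
    exact sub_mem (neg_mem (Subalgebra.smul_mem _ (letterGen_mem_polyCliff _ (.poly false)) _))
      (mul_mem (smul_C_mul_C_mem_polyCliff _ _ _) (letterGen_mem_polyCliff _ (.poly false)))
  match κ with
  | .poly false => exact hX
  | .poly true =>
    exact hecke_mul_inv_mem (X_mul_Xinv _) (Xinv_mul_X _) (letterGen_mem_polyCliff _ (.poly true))
      (letterGen_mem_polyCliff _ (.poly true)) hX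
  | .cliff =>
    rw [letterGen, letterGen, T_mul_C_lo, sub_self]
    exact zero_mem _

theorem T_mul_letterGen_hi (i : Fin (n - 1)) (κ : LetterKind) :
    T F q i * letterGen q (hi i) κ - letterGen q (lo i) κ * T F q i ∈ polyCliff F (letter q n) := by
  have hX : T F q i * X F q (hi i) - X F q (lo i) * T F q i ∈ polyCliff F (letter q n) := by
    rw [hecke_mul_poly_hi (T_mul_self i) (T_mul_C_lo i) (C_mul_self _) (C_mul_self _)
      (C_lo_anticomm i) (T_cross i), ← smul_mul_assoc]
    exact sub_mem (Subalgebra.smul_mem _ (letterGen_mem_polyCliff _ (.poly false)) _)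
      (mul_mem (smul_C_mul_C_mem_polyCliff _ _ _) (letterGen_mem_polyCliff _ (.poly false)))
  match κ with
  | .poly false => exact hX
  | .poly true =>
    exact hecke_mul_inv_mem (X_mul_Xinv _) (Xinv_mul_X _) (letterGen_mem_polyCliff _ (.poly true))
      (letterGen_mem_polyCliff _ (.poly true)) hX
  | .cliff =>
    rw [letterGen, letterGen, hecke_mul_cliff_hi (T_mul_self i) (T_mul_C_lo i)]
    exact Subalgebra.smul_mem _
      (sub_mem (letterGen_mem_polyCliff _ .cliff) (letterGen_mem_polyCliff _ .cliff)) _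

theorem letter_lo (i : Fin (n - 1)) (κ : LetterKind) : letter q n i κ = letterGen q (lo i) κ :=
  dif_pos (lo i).isLt

theorem letter_hi (i : Fin (n - 1)) (κ : LetterKind) :
    letter q n (i + 1) κ = letterGen q (hi i) κ :=
  dif_pos (hi i).isLt

theorem heckeLetter_val (i : Fin (n - 1)) : heckeLetter q n i = T F q i := dif_pos i.isLt

theorem heckeLetter_eq_zero_or (i : ℕ) :
    heckeLetter q n i = 0 ∨ ∃ j : Fin (n - 1), (j : ℕ) = i ∧ heckeLetter q n i = T F q j := by
  by_cases h : i < n - 1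
  · exact .inr ⟨⟨i, h⟩, rfl, dif_pos h⟩
  · exact .inl (dif_neg h)

theorem T_mem_heckeFiltration (i : Fin (n - 1)) :
    T F q i ∈ heckeFiltration F (letter q n) (heckeLetter q n) 2 := by
  have hword := word_mem_heckeFiltration (F := F) (z := letter q n) (t := heckeLetter q n) [(i : ℕ)]
  rwa [word_singleton, heckeLetter_val] at hword

theorem heckeLetter_sq_mem (i : ℕ) :
    heckeLetter q n i * heckeLetter q n i ∈ heckeFiltration F (letter q n) (heckeLetter q n) 2 := by
  obtain h | ⟨i, rfl, h⟩ := heckeLetter_eq_zero_or (q := q) (n := n) i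
  · rw [h, mul_zero]
    exact zero_mem _
  · rw [h, T_mul_self]
    exact add_mem (Submodule.smul_mem _ _ (T_mem_heckeFiltration i))
      (heckeFiltration_mono one_le_two (polyCliff_subset_heckeFiltration (one_mem _)))

theorem heckeLetter_braid (i : ℕ) :
    heckeLetter q n i * heckeLetter q n (i + 1) * heckeLetter q n i =
      heckeLetter q n (i + 1) * heckeLetter q n i * heckeLetter q n (i + 1) := by
  unfold heckeLetter
  split_ifs with hi hi'
  · simpa [T] using mkAlgHom_eq_of_rel (Rel.Tbraid (q := q) ⟨i, hi⟩ ⟨i + 1, hi'⟩ rfl)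
  all_goals simp only [mul_zero, zero_mul]

theorem heckeLetter_commute {i j : ℕ} (h : i + 1 < j) :
    Commute (heckeLetter q n i) (heckeLetter q n j) := by
  unfold heckeLetter
  split_ifs with hi hj
  · exact commute_of_rel (Rel.TTfar (q := q) ⟨i, hi⟩ ⟨j, hj⟩ h)
  exacts [.zero_right _, .zero_left _, .zero_left _]

theorem heckeLetter_commute_letter {i j : ℕ} (hlo : j ≠ i) (hhi : j ≠ i + 1) (κ : LetterKind) :
    Commute (heckeLetter q n i) (letter q n j κ) := by
  unfold heckeLetter letter
  split_ifs with hi hj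
  · exact T_commute_letterGen (i := ⟨i, hi⟩) (j := ⟨j, hj⟩) (Fin.ne_of_val_ne hlo)
      (Fin.ne_of_val_ne hhi) κ
  exacts [.zero_right _, .zero_left _, .zero_left _]

theorem heckeCliffordRel (q : F) (n : ℕ) : HeckeCliffordRel F (letter q n) (heckeLetter q n) where
  letter_far i j κ κ' hij := by
    unfold letter
    split_ifs
    · exact letterGen_far (Fin.ne_of_val_ne hij) κ κ'
    all_goals simp only [mul_zero, zero_mul, smul_zero]
  poly_poly i b b' := by
    unfold letter
    split_ifs
    exacts [letterGen_poly_commute _ b b', .zero_left _]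
  cliff_poly i b := by
    unfold letter
    split_ifs
    exacts [C_mul_letterGen_poly _ b, by simp only [mul_zero]]
  cliff_sq i := by
    by_cases h : i < n
    · exact ⟨1, by simp [letter, letterGen, h, C_mul_self]⟩
    · exact ⟨0, by simp [letter, h]⟩
  hecke_sq := heckeLetter_sq_mem
  hecke_braid := heckeLetter_braid
  hecke_far _ _ := heckeLetter_commute
  hecke_letter_far _ _ κ hlo hhi := heckeLetter_commute_letter hlo hhi κ
  hecke_letter_lo i κ := by
    obtain h | ⟨i, rfl, h⟩ := heckeLetter_eq_zero_or (q := q) (n := n) i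
    · simp [h]
    · rw [h, letter_lo, letter_hi]
      exact T_mul_letterGen_lo i κ
  hecke_letter_hi i κ := by
    obtain h | ⟨i, rfl, h⟩ := heckeLetter_eq_zero_or (q := q) (n := n) i
    · simp [h]
    · rw [h, letter_lo, letter_hi]
      exact T_mul_letterGen_hi i κ

end Letters

section TraceInvariance

variable {F : Type} [Field F] {q : F} {n : ℕ}

theorem H_induction {P : H F q n → Prop} (scalar : ∀ r, P (algebraMap F _ r))
    (letterGen : ∀ i κ, P (letterGen q i κ)) (hecke : ∀ i, P (T F q i))
    (mul : ∀ a b, P a → P b → P (a * b)) (add : ∀ a b, P a → P b → P (a + b)) (h : H F q n) :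
    P h := by
  obtain ⟨a, rfl⟩ := RingQuot.mkAlgHom_surjective F (Rel F q n) h
  induction a using FreeAlgebra.induction with
  | grade0 r => rw [AlgHom.commutes]; exact scalar r
  | grade1 x =>
    cases x with
    | X i => exact letterGen i (.poly false)
    | Xinv i => exact letterGen i (.poly true)
    | C i => exact letterGen i .cliff
    | T i => exact hecke i
  | mul a b ha hb => rw [map_mul]; exact mul _ _ ha hb
  | add a b ha hb => rw [map_add]; exact add _ _ ha hb

theorem exists_mem_heckeFiltration (h : H F q n) :
    ∃ k, h ∈ heckeFiltration F (letter q n) (heckeLetter q n) k := by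
  induction h using H_induction with
  | scalar r => exact ⟨1, polyCliff_subset_heckeFiltration (Subalgebra.algebraMap_mem _ r)⟩
  | letterGen i κ => exact ⟨1, polyCliff_subset_heckeFiltration (letterGen_mem_polyCliff i κ)⟩
  | hecke i => exact ⟨2, T_mem_heckeFiltration i⟩
  | mul a b ha hb =>
    obtain ⟨k, hk⟩ := ha
    obtain ⟨l, hl⟩ := hb
    exact ⟨k + l, (heckeCliffordRel q n).mul_mem_heckeFiltration (Nat.le_succ _) hk hl⟩
  | add a b ha hb =>
    obtain ⟨k, hk⟩ := ha
    obtain ⟨l, hl⟩ := hb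
    exact ⟨max k l, add_mem (heckeFiltration_mono (le_max_left k l) hk)
      (heckeFiltration_mono (le_max_right k l) hl)⟩

variable {δ : H F q n →ₐ[F] H F q n} {τ : H F q n →ₗ[F] H F q n}

theorem IsGradingAut.map_letterGen (hδ : IsGradingAut F q δ) (i : Fin n) (κ : LetterKind) :
    δ (letterGen q i κ) = (-1 : F) ^ κ.degree • letterGen q i κ := by
  obtain ⟨hX, hXinv, hC, -⟩ := hδ
  match κ with
  | .poly b =>
    rw [LetterKind.degree, pow_zero, one_smul]
    cases b
    exacts [hX i, hXinv i]
  | .cliff =>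
    rw [LetterKind.degree, pow_one]
    exact (hC i).trans (neg_one_smul F _).symm

theorem IsTauAntiAut.map_letterGen (hτ : IsTauAntiAut F q τ) (i : Fin n) (κ : LetterKind) :
    τ (letterGen q i κ) = letterGen q i κ := by
  obtain ⟨-, -, -, -, hC, hX, hXinv⟩ := hτ
  match κ with
  | .poly false => exact hX i
  | .poly true => exact hXinv i
  | .cliff => exact hC i

theorem IsTauAntiAut.map_algebraMap (hτ : IsTauAntiAut F q τ) (r : F) :
    τ (algebraMap F _ r) = algebraMap F _ r := by
  rw [Algebra.algebraMap_eq_smul_one, map_smul, hτ.2.2.1]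

theorem IsTauAntiAut.involutive (hτ : IsTauAntiAut F q τ) : Function.Involutive τ := by
  intro h
  have hscalar := hτ.map_algebraMap
  have hletter := hτ.map_letterGen
  obtain ⟨-, hmul, -, hT, hC, -⟩ := hτ
  induction h using H_induction with
  | scalar r => rw [hscalar, hscalar]
  | letterGen i κ => rw [hletter, hletter]
  | hecke i =>
    rw [hT, map_add, hT, map_smul, hmul, hC, hC, C_lo_anticomm, smul_neg]
    abel
  | mul a b ha hb => rw [hmul, hmul, ha, hb]
  | add a b ha hb => rw [map_add, map_add, ha, hb]

theorem IsGradingAut.apply_tau (hδ : IsGradingAut F q δ) (hτ : IsTauAntiAut F q τ) (h : H F q n) :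
    δ (τ h) = τ (δ h) := by
  have hscalar := hτ.map_algebraMap
  have hτletter := hτ.map_letterGen
  have hδletter := hδ.map_letterGen
  obtain ⟨-, hmul, -, hT, -⟩ := hτ
  obtain ⟨-, -, hδC, hδT⟩ := hδ
  induction h using H_induction with
  | scalar r => rw [hscalar, AlgHom.commutes, hscalar]
  | letterGen i κ => rw [hτletter, hδletter, map_smul, hτletter]
  | hecke i =>
    have hCC : δ (C F q (lo i) * C F q (hi i)) = C F q (lo i) * C F q (hi i) := by
      rw [map_mul, hδC, hδC]
      exact neg_mul_neg (C F q (lo i)) _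
    rw [hδT, hT, map_add, map_smul, hδT, hCC]
  | mul a b ha hb => rw [hmul, map_mul, map_mul, hmul, ha, hb]
  | add a b ha hb => rw [map_add, map_add, map_add, map_add, ha, hb]

theorem isAntiTrace_sub_tau (hδ : IsGradingAut F q δ) (hτ : IsTauAntiAut F q τ)
    {f : H F q n →ₗ[F] F} (hf : ∀ a b, f (a * b) = f (b * a)) (hfδ : ∀ a, f (δ a) = f a) :
    IsAntiTrace (letter q n) (heckeLetter q n) δ τ (f - f ∘ₗ τ) where
  trace_mul_comm a b := by simp [hτ.2.1, hf a b, hf (τ a)]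
  δ_letter i κ := by
    unfold letter
    split_ifs
    exacts [hδ.map_letterGen _ κ, by rw [map_zero, smul_zero]]
  δ_hecke i := by
    unfold heckeLetter
    split_ifs
    exacts [hδ.2.2.2 _, map_zero δ]
  trace_δ a := by simp [hfδ, ← hδ.apply_tau hτ]
  τ_mul := hτ.2.1
  τ_one := hτ.2.2.1
  τ_poly i b := by
    unfold letter
    split_ifs
    exacts [hτ.map_letterGen _ _, map_zero τ]
  τ_hecke i := by
    obtain h | ⟨i, rfl, h⟩ := heckeLetter_eq_zero_or (q := q) (n := n) i
    · simp [h]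
    · rw [h, hτ.2.2.2.1, add_sub_cancel_left]
      exact smul_C_mul_C_mem_polyCliff _ _ _
  trace_τ a := by simp [hτ.involutive a]

theorem trace_form_tau (h2 : (2 : F) ≠ 0) (hδ : IsGradingAut F q δ) (hτ : IsTauAntiAut F q τ)
    {f : H F q n →ₗ[F] F} (hf : ∀ a b, f (a * b) = f (b * a)) (hfδ : ∀ a, f (δ a) = f a)
    (h : H F q n) : f (τ h) = f h := by
  obtain ⟨k, hk⟩ := exists_mem_heckeFiltration h
  exact (sub_eq_zero.1 <| (heckeCliffordRel q n).trace_eq_zero_of_mem_heckeFiltration h2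
    (isAntiTrace_sub_tau hδ hτ hf hfδ) hk).symm

theorem trace_rep_tau (h2 : (2 : F) ≠ 0) (hδ : IsGradingAut F q δ) (hτ : IsTauAntiAut F q τ)
    {M : Type*} [AddCommGroup M] [Module F M] {ρ : H F q n →ₐ[F] Module.End F M}
    {J : Module.End F M} (hJ : J * J = 1) (hJρ : ∀ h, J * ρ h = ρ (δ h) * J) (h : H F q n) :
    LinearMap.trace F M (ρ (τ h)) = LinearMap.trace F M (ρ h) := by
  refine trace_form_tau (f := LinearMap.trace F M ∘ₗ ρ.toLinearMap) h2 hδ hτ (fun a b => ?_)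
    (fun a => ?_) h
  · simpa using LinearMap.trace_mul_comm F (ρ a) (ρ b)
  · have hconj : ρ (δ a) = J * ρ a * J := by rw [hJρ, mul_assoc, hJ, mul_one]
    simp only [LinearMap.comp_apply, AlgHom.toLinearMap_apply]
    rw [hconj, LinearMap.trace_mul_comm, ← mul_assoc, hJ, one_mul]

end TraceInvariance

/-! ### Semisimple modules and their traces -/

section Semisimple

variable {F A M N : Type*} [CommRing F] [Ring A] [Algebra F A]
  [AddCommGroup M] [Module A M] [AddCommGroup N] [Module A N]
  [IsSemisimpleModule A M] [IsSemisimpleModule A N]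

theorem isSemisimpleModule_prod : IsSemisimpleModule A (M × N) := by
  have hsup := IsSemisimpleModule.sup (IsSemisimpleModule.range (LinearMap.inl A M N))
    (IsSemisimpleModule.range (LinearMap.inr A M N))
  rw [LinearMap.sup_range_inl_inr] at hsup
  exact .congr Submodule.topEquiv.symm

theorem hom_eq_zero_symm (hMN : ∀ φ : M →ₗ[A] N, φ = 0) (φ : N →ₗ[A] M) : φ = 0 := by
  obtain ⟨p, hp⟩ := IsSemisimpleModule.extension_property (LinearMap.range φ).subtype
    (Submodule.subtype_injective _) LinearMap.id
  obtain ⟨ψ, hψ⟩ := IsSemisimpleModule.lifting_property φ.rangeRestrict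
    φ.surjective_rangeRestrict p
  rw [hMN ψ, LinearMap.comp_zero] at hψ
  rw [← hψ, LinearMap.zero_comp] at hp
  ext m
  exact congrArg Subtype.val (LinearMap.congr_fun hp (φ.rangeRestrict m)).symm

variable [Module F M] [IsScalarTower F A M] [Module.Finite F M]
  [Module F N] [IsScalarTower F A N] [Module.Finite F N]

/-- The density theorem for `M × N`: its endomorphisms are block diagonal. -/
theorem exists_smul_eq_of_hom_eq_zero (hMN : ∀ φ : M →ₗ[A] N, φ = 0) (f : Module.End F M)
    (hf : ∀ d : Module.End A M, Commute (d.restrictScalars F) f) :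
    ∃ a : A, (∀ m : M, a • m = f m) ∧ ∀ m : N, a • m = 0 := by
  have := isSemisimpleModule_prod (A := A) (M := M) (N := N)
  let E : Module.End (Module.End A (M × N)) (M × N) :=
    { toFun := fun e => (f e.1, 0)
      map_add' := fun e e' => by simp
      map_smul' := fun d e => by
        have hsplit : d e = d (e.1, 0) + d (0, e.2) := by rw [← map_add]; simp
        have hlo : (d (f e.1, 0)).2 = 0 :=
          LinearMap.congr_fun (hMN (LinearMap.snd A M N ∘ₗ d ∘ₗ LinearMap.inl A M N)) (f e.1)
        have hhi : (d (0, e.2)).1 = 0 := LinearMap.congr_fun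
          (hom_eq_zero_symm hMN (LinearMap.fst A M N ∘ₗ d ∘ₗ LinearMap.inr A M N)) e.2
        have hcomm : (d (f e.1, 0)).1 = f (d (e.1, 0)).1 :=
          LinearMap.congr_fun (hf (LinearMap.fst A M N ∘ₗ d ∘ₗ LinearMap.inl A M N)) e.1
        refine Prod.ext ?_ hlo.symm
        simp only [Module.End.smul_def, RingHom.id_apply]
        rw [hcomm, hsplit, Prod.fst_add, hhi, add_zero] }
  have : Module.Finite (Module.End A (M × N)) (M × N) :=
    .of_restrictScalars_finite F (Module.End A (M × N)) (M × N)
  obtain ⟨a, ha⟩ := Module.Finite.toModuleEnd_moduleEnd_surjective E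
  exact ⟨a, fun m => congrArg Prod.fst (LinearMap.congr_fun ha (m, 0)),
    fun m => congrArg Prod.snd (LinearMap.congr_fun ha (0, m))⟩

end Semisimple

theorem trace_smulRight {F M : Type*} [CommRing F] [AddCommGroup M] [Module F M] [Module.Free F M]
    [Module.Finite F M] (φ : Module.Dual F M) (m : M) :
    LinearMap.trace F M (φ.smulRight m) = φ m :=
  (LinearMap.trace_eq_contract_apply F M (φ ⊗ₜ m)).trans (contractLeft_apply φ m)

/-! ### Graded simple modules -/

section GradedSimple

variable {F A M N : Type*} [Field F] [Ring A] [AddCommGroup M] [Module F M] [Module A M]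
  [AddCommGroup N] [Module F N] [Module A N]

/-- An irreducible supermodule: `J` is the parity involution of `M`, `δ` that of `A`, so that the
graded submodules are the `J`-stable ones. -/
structure IsGradedSimple (δ : A → A) (J : Module.End F M) : Prop where
  apply_apply : ∀ m, J (J m) = m
  apply_smul : ∀ (a : A) (m : M), J (a • m) = δ a • J m
  eq_bot_or_top : ∀ V : Submodule A M, (∀ m ∈ V, J m ∈ V) → V = ⊥ ∨ V = ⊤

namespace IsGradedSimple

variable {δ : A → A} {J : Module.End F M} {K : Module.End F N}

theorem δ_δ_smul (hM : IsGradedSimple δ J) (a : A) (m : M) : δ (δ a) • m = a • m := by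
  rw [← hM.apply_apply m, ← hM.apply_smul, ← hM.apply_smul, hM.apply_apply, hM.apply_apply]

theorem neg (hN : IsGradedSimple δ K) : IsGradedSimple δ (-K) where
  apply_apply m := by simp only [LinearMap.neg_apply, map_neg, neg_neg, hN.apply_apply]
  apply_smul a m := by simp only [LinearMap.neg_apply, hN.apply_smul, smul_neg]
  eq_bot_or_top V hV := hN.eq_bot_or_top V fun m hm => neg_mem_iff.1 (hV m hm)

/-- The image of a submodule under the parity involution. -/
def flip (hM : IsGradedSimple δ J) (V : Submodule A M) : Submodule A M where
  carrier := {m | J m ∈ V}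
  add_mem' {a b} ha hb := show J (a + b) ∈ V from map_add J a b ▸ add_mem ha hb
  zero_mem' := show J 0 ∈ V from (map_zero J).symm ▸ zero_mem V
  smul_mem' a m hm := show J (a • m) ∈ V from hM.apply_smul a m ▸ V.smul_mem _ hm

theorem apply_mem_flip (hM : IsGradedSimple δ J) {V : Submodule A M} {m : M} (hm : m ∈ V) :
    J m ∈ hM.flip V :=
  show J (J m) ∈ V from (hM.apply_apply m).symm ▸ hm

theorem isSemisimpleModule (hM : IsGradedSimple δ J) : IsSemisimpleModule A M := by
  refine (isSemisimpleModule_iff A M).2 ⟨fun V => ?_⟩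
  have hinf := hM.eq_bot_or_top (V ⊓ hM.flip V) fun m hm => ⟨hm.2, hM.apply_mem_flip hm.1⟩
  have hsup := hM.eq_bot_or_top (V ⊔ hM.flip V) fun m hm => by
    obtain ⟨v, hv, w, hw, rfl⟩ := Submodule.mem_sup.1 hm
    rw [map_add]
    exact add_mem (Submodule.mem_sup_right (hM.apply_mem_flip hv)) (Submodule.mem_sup_left hw)
  obtain hinf | hinf := hinf
  · obtain hsup | hsup := hsup
    · exact ⟨⊤, by rw [(sup_eq_bot_iff.1 hsup).1]; exact isCompl_bot_top⟩
    · exact ⟨hM.flip V, disjoint_iff.2 hinf, codisjoint_iff.2 hsup⟩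
  · exact ⟨⊥, by rw [(inf_eq_top_iff.1 hinf).1]; exact isCompl_top_bot⟩

theorem bijective_of_even (hM : IsGradedSimple δ J) (hN : IsGradedSimple δ K) {φ : M →ₗ[A] N}
    (hφ : φ ≠ 0) (heven : ∀ m, φ (J m) = K (φ m)) : Function.Bijective φ := by
  have hker := hM.eq_bot_or_top (LinearMap.ker φ) fun m hm => by
    rw [LinearMap.mem_ker] at hm ⊢
    rw [heven, hm, map_zero]
  have hrange := hN.eq_bot_or_top (LinearMap.range φ) <| by
    rintro _ ⟨m, rfl⟩
    exact ⟨J m, heven m⟩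
  exact ⟨LinearMap.ker_eq_bot.1 (hker.resolve_right (hφ ∘ LinearMap.ker_eq_top.1)),
    LinearMap.range_eq_top.1 (hrange.resolve_left (hφ ∘ LinearMap.range_eq_bot.1))⟩

/-- Twice the even part of a homomorphism.  Passing from `K` to `-K` gives the odd part. -/
def evenPart (hM : IsGradedSimple δ J) (hN : IsGradedSimple δ K) (φ : M →ₗ[A] N) : M →ₗ[A] N where
  toFun m := φ m + K (φ (J m))
  map_add' m m' := by simp only [map_add]; abel
  map_smul' a m := by
    simp only [hM.apply_smul, hN.apply_smul, hN.δ_δ_smul, map_smul, smul_add, RingHom.id_apply]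

theorem evenPart_apply (hM : IsGradedSimple δ J) (hN : IsGradedSimple δ K) (φ : M →ₗ[A] N) (m : M) :
    hM.evenPart hN φ m = φ m + K (φ (J m)) := rfl

theorem evenPart_even (hM : IsGradedSimple δ J) (hN : IsGradedSimple δ K) (φ : M →ₗ[A] N) (m : M) :
    hM.evenPart hN φ (J m) = K (hM.evenPart hN φ m) := by
  rw [evenPart_apply, evenPart_apply, map_add, hM.apply_apply, hN.apply_apply, add_comm]

theorem evenPart_add_evenPart_neg (hM : IsGradedSimple δ J) (hN : IsGradedSimple δ K)
    (φ : M →ₗ[A] N) : hM.evenPart hN φ + hM.evenPart hN.neg φ = φ + φ := by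
  ext m
  simp only [LinearMap.add_apply, evenPart_apply, LinearMap.neg_apply]
  abel

theorem exists_homogeneous_equiv (h2 : (2 : F) ≠ 0) (hM : IsGradedSimple δ J)
    (hN : IsGradedSimple δ K) {φ : M →ₗ[A] N} (hφ : φ ≠ 0) :
    ∃ ψ : M ≃ₗ[A] N, (∀ m, ψ (J m) = K (ψ m)) ∨ ∀ m, ψ (J m) = (-K) (ψ m) := by
  by_cases heven : hM.evenPart hN φ = 0
  · have hodd : hM.evenPart hN.neg φ ≠ 0 := fun hodd => hφ <| LinearMap.ext fun m => by
      have hsum := LinearMap.congr_fun (hM.evenPart_add_evenPart_neg hN φ) m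
      rw [heven, hodd, add_zero, LinearMap.zero_apply, LinearMap.add_apply, ← two_smul F] at hsum
      exact (smul_eq_zero.1 hsum.symm).resolve_left h2
    exact ⟨.ofBijective _ (hM.bijective_of_even hN.neg hodd (hM.evenPart_even hN.neg φ)),
      .inr (hM.evenPart_even hN.neg φ)⟩
  · exact ⟨.ofBijective _ (hM.bijective_of_even hN heven (hM.evenPart_even hN φ)),
      .inl (hM.evenPart_even hN φ)⟩

section Schur

variable [Algebra F A] [IsScalarTower F A M] [FiniteDimensional F M] [IsAlgClosed F] [Nontrivial M]

theorem exists_eq_smul_one_of_even (hM : IsGradedSimple δ J) {d : Module.End A M}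
    (heven : ∀ m, d (J m) = J (d m)) : ∃ r : F, d = r • (1 : Module.End A M) := by
  obtain ⟨r, hr⟩ := Module.End.exists_eigenvalue (d.restrictScalars F)
  obtain ⟨v, hv⟩ := hr.exists_hasEigenvector
  refine ⟨r, sub_eq_zero.1 (by_contra fun hne => hv.2 ?_)⟩
  refine (hM.bijective_of_even hM hne fun m => ?_).1 ?_
  · simp only [LinearMap.sub_apply, LinearMap.smul_apply, Module.End.one_apply, heven, map_sub,
      map_smul]
  · rw [map_zero, LinearMap.sub_apply, LinearMap.smul_apply, Module.End.one_apply, sub_eq_zero]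
    exact hv.apply_eq_smul

theorem exists_odd_sq_eq_one (hM : IsGradedSimple δ J) {d : Module.End A M} (hd : d ≠ 0)
    (hodd : ∀ m, d (J m) = (-J) (d m)) :
    ∃ u : Module.End A M, u * u = 1 ∧ ∀ m, u (J m) = (-J) (u m) := by
  obtain ⟨r, hr⟩ := hM.exists_eq_smul_one_of_even (d := d * d) fun m => by
    simp only [Module.End.mul_apply, hodd, LinearMap.neg_apply, map_neg, neg_neg]
  have hinj := (hM.bijective_of_even hM.neg hd hodd).1
  have hr0 : r ≠ 0 := by
    rintro rfl
    rw [zero_smul] at hr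
    exact hd (LinearMap.ext fun m => hinj ((LinearMap.congr_fun hr m).trans (map_zero d).symm))
  obtain ⟨s, hs⟩ := IsAlgClosed.exists_eq_mul_self r⁻¹
  refine ⟨s • d, ?_, fun m => ?_⟩
  · rw [smul_mul_smul_comm, hr, smul_smul, ← hs, inv_mul_cancel₀ hr0, one_smul]
  · rw [LinearMap.smul_apply, LinearMap.smul_apply, hodd, map_smul]

/-- The super version of Schur's lemma: the endomorphism superalgebra is `F` or a Clifford
superalgebra of rank one. -/
theorem exists_forall_eq_smul_one_add_smul (h2 : (2 : F) ≠ 0) (hM : IsGradedSimple δ J) :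
    ∃ u : Module.End A M, (u = 0 ∨ u * u = 1) ∧
      ∀ d : Module.End A M, ∃ r s : F, d = r • (1 : Module.End A M) + s • u := by
  suffices hsuff : ∃ u : Module.End A M, (u = 0 ∨ u * u = 1) ∧
      ∀ d : Module.End A M, (∀ m, d (J m) = (-J) (d m)) → ∃ s : F, d = s • u by
    obtain ⟨u, hu, hodd⟩ := hsuff
    refine ⟨u, hu, fun d => ?_⟩
    obtain ⟨r, hr⟩ := hM.exists_eq_smul_one_of_even (hM.evenPart_even hM d)
    obtain ⟨s, hs⟩ := hodd _ (hM.evenPart_even hM.neg d)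
    refine ⟨2⁻¹ * r, 2⁻¹ * s, ?_⟩
    rw [mul_smul, mul_smul, ← hr, ← hs, ← smul_add, evenPart_add_evenPart_neg, ← two_smul F,
      inv_smul_smul₀ h2]
  by_cases hodd : ∀ d : Module.End A M, (∀ m, d (J m) = (-J) (d m)) → d = 0
  · exact ⟨0, .inl rfl, fun d hd => ⟨0, by rw [hodd d hd, smul_zero]⟩⟩
  · push Not at hodd
    obtain ⟨d₀, hd₀, hne⟩ := hodd
    obtain ⟨u, huu, hu⟩ := hM.exists_odd_sq_eq_one hne hd₀
    refine ⟨u, .inr huu, fun d hd => ?_⟩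
    obtain ⟨s, hs⟩ := hM.exists_eq_smul_one_of_even (d := u * d) fun m => by
      simp only [Module.End.mul_apply, hu, hd, LinearMap.neg_apply, map_neg, neg_neg]
    exact ⟨s, by rw [← one_mul d, ← huu, mul_assoc, hs, mul_smul_comm, mul_one]⟩

theorem exists_commute_trace_ne_zero (h2 : (2 : F) ≠ 0) (hM : IsGradedSimple δ J) :
    ∃ f : Module.End F M, LinearMap.trace F M f ≠ 0 ∧
      ∀ d : Module.End A M, Commute (d.restrictScalars F) f := by
  obtain ⟨m, hm⟩ := exists_ne (0 : M)
  obtain ⟨φ, hφ⟩ := Module.Projective.exists_dual_eq_one F hm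
  obtain ⟨u, hu, hspan⟩ := hM.exists_forall_eq_smul_one_add_smul h2
  let v : Module.End F M := u.restrictScalars F
  let y : Module.End F M := φ.smulRight m
  have hy : LinearMap.trace F M y = 1 := (trace_smulRight φ m).trans hφ
  have hspan' : ∀ f : Module.End F M, Commute v f →
      ∀ d : Module.End A M, Commute (d.restrictScalars F) f := by
    intro f hf d
    obtain ⟨r, s, rfl⟩ := hspan d
    exact ((Commute.one_left f).smul_left r).add_left (hf.smul_left s)
  obtain rfl | huu := hu
  · exact ⟨y, hy ▸ one_ne_zero, hspan' y (Commute.zero_left y)⟩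
  · have hvv : v * v = 1 := LinearMap.ext fun m => LinearMap.congr_fun huu m
    refine ⟨y + v * y * v, ?_, hspan' _ ?_⟩
    · rwa [map_add, LinearMap.trace_mul_comm, ← mul_assoc, hvv, one_mul, hy, one_add_one_eq_two]
    · rw [Commute, SemiconjBy, mul_add, add_mul, mul_assoc (v * y), hvv, mul_one, mul_assoc v y v,
        ← mul_assoc v v, hvv, one_mul, add_comm]

variable [IsScalarTower F A N] [FiniteDimensional F N]

theorem exists_hom_ne_zero_of_trace_eq (h2 : (2 : F) ≠ 0) (hM : IsGradedSimple δ J)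
    (hN : IsGradedSimple δ K) (htr : ∀ a : A, LinearMap.trace F M (Algebra.lsmul F F M a) =
      LinearMap.trace F N (Algebra.lsmul F F N a)) : ∃ φ : M →ₗ[A] N, φ ≠ 0 := by
  by_contra! hMN
  have := hM.isSemisimpleModule
  have := hN.isSemisimpleModule
  obtain ⟨f, hf, hcomm⟩ := hM.exists_commute_trace_ne_zero h2
  obtain ⟨a, haM, haN⟩ := exists_smul_eq_of_hom_eq_zero hMN f hcomm
  have haM' : Algebra.lsmul F F M a = f := LinearMap.ext haM
  have haN' : Algebra.lsmul F F N a = 0 := LinearMap.ext haN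
  exact hf (by rw [← haM', htr, haN', map_zero])

theorem exists_homogeneous_equiv_of_trace_eq (h2 : (2 : F) ≠ 0) (hM : IsGradedSimple δ J)
    (hN : IsGradedSimple δ K) (htr : ∀ a : A, LinearMap.trace F M (Algebra.lsmul F F M a) =
      LinearMap.trace F N (Algebra.lsmul F F N a)) :
    ∃ ψ : M ≃ₗ[A] N, (∀ m, ψ (J m) = K (ψ m)) ∨ ∀ m, ψ (J m) = (-K) (ψ m) := by
  obtain ⟨φ, hφ⟩ := hM.exists_hom_ne_zero_of_trace_eq h2 hN htr
  exact hM.exists_homogeneous_equiv h2 hN hφ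

end Schur

end IsGradedSimple

end GradedSimple

/-! ### Dual modules -/

/-- The dual `M^τ` of an `A`-module for an antiendomorphism `τ`: `(a • φ) m = φ (τ a • m)`.  It is
not an instance because it depends on `τ`. -/
abbrev dualModule {F A M : Type*} [CommRing F] [Ring A] [Algebra F A] [AddCommGroup M] [Module F M]
    [Module A M] [IsScalarTower F A M] (τ : A →ₗ[F] A) (hmul : ∀ a b, τ (a * b) = τ b * τ a)
    (hone : τ 1 = 1) : Module A (Module.Dual F M) where
  smul a φ := φ ∘ₗ Algebra.lsmul F F M (τ a)
  one_smul φ := LinearMap.ext fun m => congrArg φ (by rw [hone, map_one, Module.End.one_apply])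
  mul_smul a b φ := LinearMap.ext fun m => congrArg φ (by rw [hmul, map_mul, Module.End.mul_apply])
  smul_zero a := LinearMap.zero_comp _
  smul_add a φ ψ := LinearMap.add_comp (Algebra.lsmul F F M (τ a)) ψ φ
  add_smul a b φ := LinearMap.ext fun m =>
    (congrArg φ (by simp only [map_add, LinearMap.add_apply, Algebra.lsmul_coe])).trans
      (map_add φ (τ a • m) (τ b • m))
  zero_smul φ := LinearMap.ext fun m =>
    (congrArg φ (by simp only [map_zero, LinearMap.zero_apply])).trans (map_zero φ)

namespace IsGradedSimple

variable {F A M : Type*} [Field F] [Ring A] [Algebra F A] [AddCommGroup M] [Module F M] [Module A M]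
  [IsScalarTower F A M] [FiniteDimensional F M]
  {δ : A → A} {J : Module.End F M} {τ : A →ₗ[F] A}

theorem dual [Module A (Module.Dual F M)] [IsScalarTower F A (Module.Dual F M)]
    (hM : IsGradedSimple δ J) (hτ : Function.Surjective τ) (hδ : ∀ a, δ (τ a) = τ (δ a))
    (hsmul : ∀ (a : A) (φ : Module.Dual F M) (m : M), (a • φ) m = φ (τ a • m)) :
    IsGradedSimple δ (Module.Dual.transpose J) where
  apply_apply φ := LinearMap.ext fun m => congrArg φ (hM.apply_apply m)
  apply_smul a φ := LinearMap.ext fun m => by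
    simp only [Module.Dual.transpose_apply, LinearMap.comp_apply, hsmul]
    rw [← hδ, hM.apply_smul, hM.δ_δ_smul]
  eq_bot_or_top W hW := by
    let W' : Submodule F (Module.Dual F M) := W.restrictScalars F
    have hmem (m : M) : m ∈ W'.dualCoannihilator ↔ ∀ φ ∈ W, φ m = 0 :=
      Submodule.mem_dualCoannihilator m
    let V : Submodule A M :=
      { W'.dualCoannihilator with
        smul_mem' := fun a m hm => by
          obtain ⟨b, rfl⟩ := hτ a
          exact (hmem _).2 fun φ hφ => hsmul b φ m ▸ (hmem m).1 hm _ (W.smul_mem b hφ) }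
    have hV : ∀ m ∈ V, J m ∈ V := fun m hm => (hmem _).2 fun φ hφ => (hmem m).1 hm _ (hW φ hφ)
    have hann : W'.dualCoannihilator.dualAnnihilator = W' :=
      Subspace.dualCoannihilator_dualAnnihilator_eq
    have hVW : V.restrictScalars F = W'.dualCoannihilator := rfl
    rw [← Submodule.restrictScalars_eq_bot_iff F, ← Submodule.restrictScalars_eq_top_iff F]
    change W' = ⊥ ∨ W' = ⊤
    rw [← hann, ← hVW]
    refine (hM.eq_bot_or_top V hV).symm.imp ?_ ?_ <;> rintro hV' <;> rw [hV']
    · rw [Submodule.restrictScalars_top, Submodule.dualAnnihilator_top]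
    · rw [Submodule.restrictScalars_bot, Submodule.dualAnnihilator_bot]

theorem exists_equiv_dual_of_trace_eq [IsAlgClosed F] [Nontrivial M] (h2 : (2 : F) ≠ 0)
    (hM : IsGradedSimple δ J) (hsurj : Function.Surjective τ)
    (hmul : ∀ a b, τ (a * b) = τ b * τ a) (hone : τ 1 = 1) (hδ : ∀ a, δ (τ a) = τ (δ a))
    (htr : ∀ a, LinearMap.trace F M (Algebra.lsmul F F M (τ a)) =
      LinearMap.trace F M (Algebra.lsmul F F M a)) :
    ∃ ψ : M ≃ₗ[F] Module.Dual F M,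
      (∀ (a : A) (m : M), ψ (a • m) = ψ m ∘ₗ Algebra.lsmul F F M (τ a)) ∧
        ((∀ m, ψ (J m) = ψ m ∘ₗ J) ∨ ∀ m, ψ (J m) = -(ψ m ∘ₗ J)) := by
  let _ := dualModule (M := M) τ hmul hone
  have hsmul (a : A) (φ : Module.Dual F M) (m : M) : (a • φ) m = φ (τ a • m) := rfl
  have : IsScalarTower F A (Module.Dual F M) := ⟨fun r a φ => LinearMap.ext fun m => by
    rw [hsmul, τ.map_smul, smul_assoc, φ.map_smul, LinearMap.smul_apply, hsmul]⟩
  obtain ⟨ψ, hψ⟩ := hM.exists_homogeneous_equiv_of_trace_eq h2 (hM.dual hsurj hδ hsmul) fun a =>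
    (htr a).symm.trans (LinearMap.trace_transpose' (Algebra.lsmul F F M (τ a))).symm
  exact ⟨ψ.restrictScalars F, ψ.map_smul, hψ⟩

end IsGradedSimple

/-! ### Self-duality -/

theorem irreducible_integral_self_dual_general
    (F : Type) [Field F] [IsAlgClosed F] (h2 : (2 : F) ≠ 0) (q : F) (_hq : q ≠ 0)
    (n : ℕ) (δ : H F q n →ₐ[F] H F q n) (hδ : IsGradingAut F q δ)
    (τ : H F q n →ₗ[F] H F q n) (hτ : IsTauAntiAut F q τ)
    (M : Type*) [AddCommGroup M] [Module F M] [FiniteDimensional F M]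
    (ρ : H F q n →ₐ[F] Module.End F M)
    (JM : Module.End F M) (hJ2 : JM * JM = 1)
    (hJρ : ∀ h : H F q n, JM * ρ h = ρ (δ h) * JM)
    (hM0 : ∃ m : M, m ≠ 0)
    (hirr : ∀ V : Submodule F M, (∀ (h : H F q n) (m : M), m ∈ V → ρ h m ∈ V) →
      (∀ m ∈ V, JM m ∈ V) → V = ⊥ ∨ V = ⊤) :
    ∃ (Φ : M ≃ₗ[F] Module.Dual F M) (f₀ f₁ : M →ₗ[F] Module.Dual F M),
      (∀ m : M, Φ m = f₀ m + f₁ m) ∧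
      (∀ (h : H F q n) (m : M), f₀ (ρ h m) = (f₀ m).comp (ρ (τ h))) ∧
      (∀ (h : H F q n) (m : M), f₁ (ρ h m) = (f₁ m).comp (ρ (τ (δ h)))) ∧
      (∀ m : M, f₀ (JM m) = (f₀ m).comp JM) ∧
      (∀ m : M, f₁ (JM m) = -((f₁ m).comp JM)) := by
  let _ : Module (H F q n) M := Module.compHom M ρ.toRingHom
  have : IsScalarTower F (H F q n) M :=
    ⟨fun r h m => LinearMap.congr_fun (map_smul ρ r h) m⟩
  have : Nontrivial M := nontrivial_iff.2 ⟨_, 0, hM0.choose_spec⟩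
  have hJ : ∀ m, JM (JM m) = m := LinearMap.congr_fun hJ2
  have hJsmul : ∀ h m, JM (ρ h m) = ρ (δ h) (JM m) := fun h => LinearMap.congr_fun (hJρ h)
  have hM : IsGradedSimple δ JM := ⟨hJ, hJsmul, fun V hV => by
    have := hirr (V.restrictScalars F) (fun h _ hm => V.smul_mem h hm) hV
    rwa [Submodule.restrictScalars_eq_bot_iff, Submodule.restrictScalars_eq_top_iff] at this⟩
  obtain ⟨ψ, hψ, heven | hodd⟩ := hM.exists_equiv_dual_of_trace_eq h2 hτ.1.2 hτ.2.1 hτ.2.2.1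
    (hδ.apply_tau hτ) (trace_rep_tau h2 hδ hτ hJ2 hJρ)
  · exact ⟨ψ, ψ, 0, by simp, hψ, by simp, heven, by simp⟩
  · refine ⟨(LinearEquiv.ofInvolutive JM hJ).trans ψ, 0, ψ ∘ₗ JM, fun m => (zero_add _).symm,
      by simp, fun h m => ?_, by simp, fun m => hodd (JM m)⟩
    exact (congrArg ψ (hJsmul h m)).trans (hψ (δ h) (JM m))

/-- **Irreducible integral modules are self-dual** (Corollary `selfdual` of
Brundan–Kleshchev): every irreducible integral `H_n`-supermodule `L` satisfies
`L ≅ L^τ`, where `L^τ` is the dual space with the action `(a·φ)(m) = φ(τ(a)m)`.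
An isomorphism of supermodules is a bijective map whose even and odd parts `f₀, f₁`
are, respectively, equivariant and equivariant up to the sign twist by the grading
automorphism `δ`. -/
theorem irreducible_integral_self_dual
    (F : Type) [Field F] [IsAlgClosed F] (h2 : (2 : F) ≠ 0)
    (q : F) (hq : GoodParam F q) (n : ℕ)
    (δ : H F q n →ₐ[F] H F q n) (hδ : IsGradingAut F q δ)
    (τ : H F q n →ₗ[F] H F q n) (hτ : IsTauAntiAut F q τ)
    (M : Type) [AddCommGroup M] [Module F M] [FiniteDimensional F M]
    (ρ : H F q n →ₐ[F] Module.End F M)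
    (JM : Module.End F M) (hJ2 : JM * JM = 1)
    (hJρ : ∀ h : H F q n, JM * ρ h = ρ (δ h) * JM)
    (hM0 : ∃ m : M, m ≠ 0)
    (hirr : ∀ V : Submodule F M, (∀ (h : H F q n) (m : M), m ∈ V → ρ h m ∈ V) →
      (∀ m ∈ V, JM m ∈ V) → V = ⊥ ∨ V = ⊤)
    (hint : ∀ (k : Fin n) (lam : F),
      LinearMap.ker (ρ (X F q k + Xinv F q k) - lam • (1 : Module.End F M)) ≠ ⊥ →
        ∃ i : ℕ, memI F q i ∧ lam = qres F q i) :
    ∃ (Φ : M ≃ₗ[F] Module.Dual F M) (f₀ f₁ : M →ₗ[F] Module.Dual F M),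
      (∀ m : M, Φ m = f₀ m + f₁ m) ∧
      (∀ (h : H F q n) (m : M), f₀ (ρ h m) = (f₀ m).comp (ρ (τ h))) ∧
      (∀ (h : H F q n) (m : M), f₁ (ρ h m) = (f₁ m).comp (ρ (τ (δ h)))) ∧
      (∀ m : M, f₀ (JM m) = (f₀ m).comp JM) ∧
      (∀ m : M, f₁ (JM m) = -((f₁ m).comp JM)) :=
  irreducible_integral_self_dual_general F h2 q hq.1 n δ hδ τ hτ M ρ JM hJ2 hJρ hM0 hirr

end HC
end

section
/- There is an isomorphism of superalgebras φ: S(n) ⊗ C(n) → W(n) such that φ(1 ⊗ c_i) = c_i for i = 1,…,n and φ(t_j ⊗ 1) = (1/√(−2)) s_j(c_j − c_{j+1}) for j = 1,…,n−1, where √(−2) is a fixed square root of −2 in F. -/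
set_option maxHeartbeats 1000000

namespace HC

variable (F : Type) [Field F]

/-- Generators of the twisted group algebra `S(n) ⊗ C(n)` (super tensor product):
odd generators `t_1, …, t_{n-1}` and `c_1, …, c_n`. -/
inductive SCGen (n : ℕ) : Type
  | t : Fin (n - 1) → SCGen n
  | c : Fin n → SCGen n

/-- Generators of the Sergeev superalgebra `W(n)`: even generators `s_1, …, s_{n-1}`
and odd generators `c_1, …, c_n`. -/
inductive WGen (n : ℕ) : Type
  | s : Fin (n - 1) → WGen n
  | c : Fin n → WGen n

noncomputable def sct {n : ℕ} (i : Fin (n - 1)) : FreeAlgebra F (SCGen n) :=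
  FreeAlgebra.ι F (SCGen.t i)
noncomputable def scc {n : ℕ} (i : Fin n) : FreeAlgebra F (SCGen n) :=
  FreeAlgebra.ι F (SCGen.c i)
noncomputable def ws {n : ℕ} (i : Fin (n - 1)) : FreeAlgebra F (WGen n) :=
  FreeAlgebra.ι F (WGen.s i)
noncomputable def wc {n : ℕ} (i : Fin n) : FreeAlgebra F (WGen n) :=
  FreeAlgebra.ι F (WGen.c i)

/-- The defining relations of `S(n) ⊗ C(n)`: the `t_i` satisfy `t_i² = 1`, the braid
relations and `t_i t_j = -t_j t_i` for `|i-j| > 1` (relations of the twisted group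
algebra `S(n)`); the `c_i` satisfy the Clifford relations (relations of `C(n)`); and,
by the sign rule of the super tensor product of superalgebras applied to the odd
elements `t_i ⊗ 1` and `1 ⊗ c_j`, the mixed relations `t_i c_j = -c_j t_i`. -/
inductive SCRel (n : ℕ) : FreeAlgebra F (SCGen n) → FreeAlgebra F (SCGen n) → Prop
  | tt (i : Fin (n - 1)) : SCRel n (sct F i * sct F i) 1
  | tbraid (i j : Fin (n - 1)) (h : (j : ℕ) = (i : ℕ) + 1) :
      SCRel n (sct F i * sct F j * sct F i) (sct F j * sct F i * sct F j)
  | tfar (i j : Fin (n - 1)) (h : (i : ℕ) + 1 < (j : ℕ)) :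
      SCRel n (sct F i * sct F j) (-(sct F j * sct F i))
  | cc (i : Fin n) : SCRel n (scc F i * scc F i) 1
  | canti (i j : Fin n) (h : i ≠ j) :
      SCRel n (scc F i * scc F j) (-(scc F j * scc F i))
  | tc (i : Fin (n - 1)) (j : Fin n) :
      SCRel n (sct F i * scc F j) (-(scc F j * sct F i))

/-- The defining relations of the Sergeev superalgebra `W(n)`. -/
inductive WRel (n : ℕ) : FreeAlgebra F (WGen n) → FreeAlgebra F (WGen n) → Prop
  | ss (i : Fin (n - 1)) : WRel n (ws F i * ws F i) 1
  | sbraid (i j : Fin (n - 1)) (h : (j : ℕ) = (i : ℕ) + 1) :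
      WRel n (ws F i * ws F j * ws F i) (ws F j * ws F i * ws F j)
  | sfar (i j : Fin (n - 1)) (h : (i : ℕ) + 1 < (j : ℕ)) :
      WRel n (ws F i * ws F j) (ws F j * ws F i)
  | cc (i : Fin n) : WRel n (wc F i * wc F i) 1
  | canti (i j : Fin n) (h : i ≠ j) :
      WRel n (wc F i * wc F j) (-(wc F j * wc F i))
  | sclo (i : Fin (n - 1)) : WRel n (ws F i * wc F (lo i)) (wc F (hi i) * ws F i)
  | schi (i : Fin (n - 1)) : WRel n (ws F i * wc F (hi i)) (wc F (lo i) * ws F i)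
  | sco (i : Fin (n - 1)) (j : Fin n) (h1 : j ≠ lo i) (h2 : j ≠ hi i) :
      WRel n (ws F i * wc F j) (wc F j * ws F i)

/-- The super tensor product `S(n) ⊗ C(n)`, presented by generators and relations. -/
abbrev SC (n : ℕ) : Type := RingQuot (SCRel F n)

/-- The Sergeev superalgebra `W(n)`. -/
abbrev W (n : ℕ) : Type := RingQuot (WRel F n)

noncomputable def tS (n : ℕ) (i : Fin (n - 1)) : SC F n :=
  RingQuot.mkAlgHom F (SCRel F n) (sct F i)
noncomputable def cS (n : ℕ) (i : Fin n) : SC F n :=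
  RingQuot.mkAlgHom F (SCRel F n) (scc F i)
noncomputable def sW (n : ℕ) (i : Fin (n - 1)) : W F n :=
  RingQuot.mkAlgHom F (WRel F n) (ws F i)
noncomputable def cW (n : ℕ) (i : Fin n) : W F n :=
  RingQuot.mkAlgHom F (WRel F n) (wc F i)

/-!
In the Clifford algebra, conjugation by `c_i - c_{i+1}` is minus the reflection exchanging `c_i`
and `c_{i+1}`. Hence `t` anticommutes with every `c_j` exactly when `t (c_i - c_{i+1})` permutes
the `c_j` as the transposition of `i` and `i + 1`. If each `t_i` anticommutes with every `c_j`, then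
up to sign a product of the `t_i (c_i - c_{i+1})` is the product of the `t_i` times the product of
the `c_i - c_{i+1}`. The latter have square `2`, hence are invertible, satisfy the braid relations
and anticommute when far apart, so the relations of `S(n)` for the `t_i` are equivalent to the
Coxeter relations for the rescaled `t_i (c_i - c_{i+1})`. Rescaling by `k` with `2 k² = -1` makes
the construction invertible, with inverse the same construction for `-k`.
-/

section Anticommutation

variable {R : Type*} [Ring R] {t u x y : R}

theorem semiconjBy_neg_iff : SemiconjBy x y (-y) ↔ x * y = -(y * x) := by
  rw [SemiconjBy, neg_mul]

theorem semiconjBy_neg_sub (hx : SemiconjBy t x (-x)) (hy : SemiconjBy t y (-y)) :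
    SemiconjBy t (x - y) (-(x - y)) :=
  neg_sub' x y ▸ hx.sub_right hy

theorem mul_mul_mul_of_semiconjBy_neg (h : SemiconjBy u x (-x)) :
    t * x * (u * y) = -(t * u * (x * y)) := by
  have hxu : x * u = -(u * x) := by rw [semiconjBy_neg_iff.mp h, neg_neg]
  rw [mul_assoc, ← mul_assoc x, hxu]
  noncomm_ring

theorem mul_mul_mul_mul_of_semiconjBy_neg (hx : SemiconjBy u x (-x)) (htx : SemiconjBy t x (-x))
    (hty : SemiconjBy t y (-y)) :
    t * x * (u * y) * (t * x) = -(t * u * t * (x * y * x)) := by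
  have hxy : t * (x * y) = x * y * t := by
    simpa only [neg_mul_neg] using (htx.mul_right hty).eq
  calc t * x * (u * y) * (t * x) = -(t * u * (x * y * t) * x) := by
        rw [mul_mul_mul_of_semiconjBy_neg hx]; noncomm_ring
    _ = -(t * u * t * (x * y * x)) := by rw [← hxy]; noncomm_ring

end Anticommutation

/-- The elements `c i` satisfy the defining relations of a Clifford superalgebra: they square
to `1` and anticommute pairwise. -/
structure IsCliffordFamily {ι R : Type*} [Ring R] (c : ι → R) : Prop where
  mul_self (i : ι) : c i * c i = 1
  anticomm : Pairwise fun i j => SemiconjBy (c i) (c j) (-c j)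

namespace IsCliffordFamily

variable {ι R : Type*} [Ring R] {c : ι → R} (hc : IsCliffordFamily c) {a b d e : ι}

include hc

theorem sub_mul_self (hab : a ≠ b) : (c a - c b) * (c a - c b) = 2 := by
  have hab' : c a * c b = -(c b * c a) := semiconjBy_neg_iff.mp (hc.anticomm hab)
  simp only [sub_mul, mul_sub, hc.mul_self, hab']
  rw [← one_add_one_eq_two]
  abel

theorem isUnit_sub (h2 : IsUnit (2 : R)) (hab : a ≠ b) : IsUnit (c a - c b) :=
  isUnit_mul_self_iff.mp (hc.sub_mul_self hab ▸ h2)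

theorem semiconjBy_sub [DecidableEq ι] (a b j : ι) :
    SemiconjBy (c a - c b) (c j) (-c (Equiv.swap a b j)) := by
  rcases eq_or_ne j a with rfl | hja
  · simp [SemiconjBy, sub_mul, mul_sub, hc.mul_self, neg_add_eq_sub]
  rcases eq_or_ne j b with rfl | hjb
  · simp [SemiconjBy, sub_mul, mul_sub, hc.mul_self, neg_add_eq_sub]
  rw [Equiv.swap_apply_of_ne_of_ne hja hjb]
  exact (hc.anticomm hja.symm).sub_left (hc.anticomm hjb.symm)

theorem sub_mul_sub_of_disjoint (had : a ≠ d) (hae : a ≠ e) (hbd : b ≠ d) (hbe : b ≠ e) :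
    (c a - c b) * (c d - c e) = -((c d - c e) * (c a - c b)) := by
  classical
  have hd := hc.semiconjBy_sub a b d
  have he := hc.semiconjBy_sub a b e
  rw [Equiv.swap_apply_of_ne_of_ne had.symm hbd.symm] at hd
  rw [Equiv.swap_apply_of_ne_of_ne hae.symm hbe.symm] at he
  exact semiconjBy_neg_iff.mp (semiconjBy_neg_sub hd he)

theorem sub_mul_sub_mul_sub [DecidableEq ι] (hab : a ≠ b) (d e : ι) :
    (c a - c b) * (c d - c e) * (c a - c b) =
      (c (Equiv.swap a b e) - c (Equiv.swap a b d)) * 2 := by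
  rw [((hc.semiconjBy_sub a b d).sub_right (hc.semiconjBy_sub a b e)).eq, neg_sub_neg, mul_assoc,
    hc.sub_mul_self hab]

theorem sub_braid (hab : a ≠ b) (had : a ≠ d) (hbd : b ≠ d) :
    (c a - c b) * (c b - c d) * (c a - c b) = (c b - c d) * (c a - c b) * (c b - c d) := by
  classical
  rw [hc.sub_mul_sub_mul_sub hab, hc.sub_mul_sub_mul_sub hbd, Equiv.swap_apply_right,
    Equiv.swap_apply_left, Equiv.swap_apply_of_ne_of_ne had.symm hbd.symm,
    Equiv.swap_apply_of_ne_of_ne hab had]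

end IsCliffordFamily

section CliffordTwist

variable {ι K R : Type*} [CommRing K] [Ring R] [Algebra K R]

/-- The element `k t (c_a - c_b)`. For `2 k² = -1` this operation exchanges generators `t` of the
twisted group algebra, which anticommute with the `c_j`, and transpositions, which permute
them. -/
def cliffordTwist (k : K) (c : ι → R) (a b : ι) (t : R) : R := k • (t * (c a - c b))

theorem map_cliffordTwist {S : Type*} [Ring S] [Algebra K S] (f : R →ₐ[K] S) (k : K) (c : ι → R)
    (a b : ι) (t : R) : f (cliffordTwist k c a b t) = cliffordTwist k (f ∘ c) a b (f t) := by
  simp only [cliffordTwist, map_smul, map_mul, map_sub, Function.comp_apply]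

variable {c : ι → R} {a b d e : ι} {t u : R}

theorem semiconjBy_cliffordTwist [DecidableEq ι] (hc : IsCliffordFamily c) (k : K) (a b : ι)
    {j : ι} {x : R}
    (h : SemiconjBy t (c (Equiv.swap a b j)) (-x)) :
    SemiconjBy (cliffordTwist k c a b t) (c j) x := by
  have htsub : SemiconjBy (t * (c a - c b)) (c j) x :=
    neg_neg x ▸ h.neg_right.mul_left (hc.semiconjBy_sub a b j)
  rw [cliffordTwist, SemiconjBy, smul_mul_assoc, mul_smul_comm, htsub.eq]

variable {k : K} (hk : 2 * k ^ 2 = -1)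

include hk

theorem isUnit_of_two_mul_sq : IsUnit k :=
  IsUnit.of_mul_eq_one (-(2 * k)) (by linear_combination -hk)

theorem isUnit_two_of_two_mul_sq : IsUnit (2 : R) := by
  have h2 : IsUnit (2 : K) := IsUnit.of_mul_eq_one (-k ^ 2) (by linear_combination -hk)
  simpa only [map_ofNat] using h2.map (algebraMap K R)

theorem sq_smul_neg_mul_two (x : R) : (k * k) • (-(x * 2)) = x := by
  rw [mul_two, ← two_smul K, ← neg_smul, smul_smul]
  convert one_smul K x using 2
  linear_combination -hk

variable (hc : IsCliffordFamily c)

include hc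

theorem cliffordTwist_neg_cliffordTwist (hab : a ≠ b) (t : R) :
    cliffordTwist (-k) c a b (cliffordTwist k c a b t) = t := by
  rw [cliffordTwist, cliffordTwist, smul_mul_assoc, mul_assoc, hc.sub_mul_self hab, smul_smul,
    neg_mul, neg_smul, ← smul_neg, sq_smul_neg_mul_two hk]

theorem semiconjBy_cliffordTwist_iff [DecidableEq ι] (hab : a ≠ b) :
    (∀ j, SemiconjBy (cliffordTwist k c a b t) (c j) (c (Equiv.swap a b j))) ↔
      ∀ j, SemiconjBy t (c j) (-c j) := by
  refine ⟨fun h j => ?_, fun h j => semiconjBy_cliffordTwist hc k a b (h _)⟩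
  have hswap : SemiconjBy (cliffordTwist k c a b t) (c (Equiv.swap a b j)) (- -c j) := by
    simpa only [Equiv.swap_apply_self, neg_neg] using h (Equiv.swap a b j)
  exact cliffordTwist_neg_cliffordTwist hk hc hab t ▸
    semiconjBy_cliffordTwist hc (-k) a b hswap

variable (ht : ∀ j, SemiconjBy t (c j) (-c j)) (hu : ∀ j, SemiconjBy u (c j) (-c j))

include ht

theorem cliffordTwist_mul_self (hab : a ≠ b) :
    cliffordTwist k c a b t * cliffordTwist k c a b t = t * t := by
  rw [cliffordTwist, smul_mul_smul_comm,
    mul_mul_mul_of_semiconjBy_neg (semiconjBy_neg_sub (ht a) (ht b)), hc.sub_mul_self hab,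
    sq_smul_neg_mul_two hk]

include hu

theorem commute_cliffordTwist_iff (hab : a ≠ b) (hde : d ≠ e) (had : a ≠ d) (hae : a ≠ e)
    (hbd : b ≠ d) (hbe : b ≠ e) :
    Commute (cliffordTwist k c a b t) (cliffordTwist k c d e u) ↔ t * u = -(u * t) := by
  have h2 := isUnit_two_of_two_mul_sq (R := R) hk
  have hk' := isUnit_of_two_mul_sq hk
  have hunit := (hc.isUnit_sub h2 hde).mul (hc.isUnit_sub h2 hab)
  rw [commute_iff_eq, cliffordTwist, cliffordTwist, smul_mul_smul_comm, smul_mul_smul_comm,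
    (hk'.mul hk').smul_left_cancel,
    mul_mul_mul_of_semiconjBy_neg (semiconjBy_neg_sub (hu a) (hu b)),
    mul_mul_mul_of_semiconjBy_neg (semiconjBy_neg_sub (ht d) (ht e)),
    hc.sub_mul_sub_of_disjoint had hae hbd hbe, neg_inj, mul_neg, ← neg_mul,
    hunit.mul_left_inj, neg_eq_iff_eq_neg]

theorem cliffordTwist_braid_iff (hab : a ≠ b) (had : a ≠ d) (hbd : b ≠ d) :
    cliffordTwist k c a b t * cliffordTwist k c b d u * cliffordTwist k c a b t =
        cliffordTwist k c b d u * cliffordTwist k c a b t * cliffordTwist k c b d u ↔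
      t * u * t = u * t * u := by
  have h2 := isUnit_two_of_two_mul_sq (R := R) hk
  have hk' := isUnit_of_two_mul_sq hk
  have hx := hc.isUnit_sub h2 hab
  have hy := hc.isUnit_sub h2 hbd
  have hunit := (hy.mul hx).mul hy
  have htx := semiconjBy_neg_sub (ht a) (ht b)
  have hty := semiconjBy_neg_sub (ht b) (ht d)
  have hux := semiconjBy_neg_sub (hu a) (hu b)
  have huy := semiconjBy_neg_sub (hu b) (hu d)
  simp only [cliffordTwist, smul_mul_smul_comm]
  rw [((hk'.mul hk').mul hk').smul_left_cancel, mul_mul_mul_mul_of_semiconjBy_neg hux htx hty,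
    mul_mul_mul_mul_of_semiconjBy_neg hty huy hux, hc.sub_braid hab had hbd, neg_inj,
    hunit.mul_left_inj]

end CliffordTwist

theorem lo_ne_hi {n : ℕ} (i : Fin (n - 1)) : lo i ≠ hi i := by
  simp [lo, hi, Fin.ext_iff]

theorem lo_eq_hi_of_val_eq_succ {n : ℕ} {i j : Fin (n - 1)} (h : (j : ℕ) = (i : ℕ) + 1) :
    lo j = hi i := by
  simp [lo, hi, h]

/-- Elements `t_i`, `c_j` satisfying the defining relations of `S(n) ⊗ C(n)`. -/
structure IsTensorFamily {R : Type*} [Ring R] {n : ℕ} (t : Fin (n - 1) → R) (c : Fin n → R) :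
    Prop where
  clifford : IsCliffordFamily c
  semiconjBy (i : Fin (n - 1)) (j : Fin n) : SemiconjBy (t i) (c j) (-c j)
  mul_self (i : Fin (n - 1)) : t i * t i = 1
  anticomm (i j : Fin (n - 1)) (h : (i : ℕ) + 1 < (j : ℕ)) : t i * t j = -(t j * t i)
  braid (i j : Fin (n - 1)) (h : (j : ℕ) = (i : ℕ) + 1) : t i * t j * t i = t j * t i * t j

/-- Elements `s_i`, `c_j` satisfying the defining relations of `W(n)`. The three mixed relations
are gathered into one: `s_i` permutes the `c_j` as the transposition of `i` and `i + 1`. -/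
structure IsSergeevFamily {R : Type*} [Ring R] {n : ℕ} (s : Fin (n - 1) → R) (c : Fin n → R) :
    Prop where
  clifford : IsCliffordFamily c
  semiconjBy (i : Fin (n - 1)) (j : Fin n) :
    SemiconjBy (s i) (c j) (c (Equiv.swap (lo i) (hi i) j))
  mul_self (i : Fin (n - 1)) : s i * s i = 1
  commute (i j : Fin (n - 1)) (h : (i : ℕ) + 1 < (j : ℕ)) : Commute (s i) (s j)
  braid (i j : Fin (n - 1)) (h : (j : ℕ) = (i : ℕ) + 1) : s i * s j * s i = s j * s i * s j

section Families

variable {K R : Type*} [CommRing K] [Ring R] [Algebra K R] {n : ℕ} {k : K}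

/-- The family `k t_i (c_i - c_{i+1})` of twists of the `t_i` along the simple transpositions. -/
def simpleTwist (k : K) (c : Fin n → R) (t : Fin (n - 1) → R) (i : Fin (n - 1)) : R :=
  cliffordTwist k c (lo i) (hi i) (t i)

theorem comp_simpleTwist {S : Type*} [Ring S] [Algebra K S] (f : R →ₐ[K] S) (k : K)
    (c : Fin n → R) (t : Fin (n - 1) → R) :
    f ∘ simpleTwist k c t = simpleTwist k (f ∘ c) (f ∘ t) :=
  funext fun _ => map_cliffordTwist f k c _ _ _

variable (hk : 2 * k ^ 2 = -1) {t : Fin (n - 1) → R} {c : Fin n → R}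

include hk

theorem simpleTwist_neg_simpleTwist (hc : IsCliffordFamily c) (t : Fin (n - 1) → R) :
    simpleTwist (-k) c (simpleTwist k c t) = t :=
  funext fun i => cliffordTwist_neg_cliffordTwist hk hc (lo_ne_hi i) (t i)

theorem simpleTwist_mul_self (hc : IsCliffordFamily c)
    (ht : ∀ i j, SemiconjBy (t i) (c j) (-c j)) (i : Fin (n - 1)) :
    simpleTwist k c t i * simpleTwist k c t i = t i * t i :=
  cliffordTwist_mul_self hk hc (ht i) (lo_ne_hi i)

theorem commute_simpleTwist_iff (hc : IsCliffordFamily c)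
    (ht : ∀ i j, SemiconjBy (t i) (c j) (-c j)) {i j : Fin (n - 1)}
    (h : (i : ℕ) + 1 < (j : ℕ)) :
    Commute (simpleTwist k c t i) (simpleTwist k c t j) ↔ t i * t j = -(t j * t i) := by
  apply commute_cliffordTwist_iff hk hc (ht i) (ht j) <;>
    simp only [lo, hi, ne_eq, Fin.ext_iff] <;> omega

theorem simpleTwist_braid_iff (hc : IsCliffordFamily c)
    (ht : ∀ i j, SemiconjBy (t i) (c j) (-c j)) {i j : Fin (n - 1)}
    (h : (j : ℕ) = (i : ℕ) + 1) :
    simpleTwist k c t i * simpleTwist k c t j * simpleTwist k c t i =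
        simpleTwist k c t j * simpleTwist k c t i * simpleTwist k c t j ↔
      t i * t j * t i = t j * t i * t j := by
  simp only [simpleTwist, lo_eq_hi_of_val_eq_succ h]
  apply cliffordTwist_braid_iff hk hc (ht i) (ht j) <;>
    simp only [lo, hi, ne_eq, Fin.ext_iff] <;> omega

theorem isSergeevFamily_simpleTwist_iff :
    IsSergeevFamily (simpleTwist k c t) c ↔ IsTensorFamily t c := by
  refine ⟨fun hs => ?_, fun hf => ?_⟩
  · have hc := hs.clifford
    have ht (i : Fin (n - 1)) : ∀ j, SemiconjBy (t i) (c j) (-c j) :=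
      (semiconjBy_cliffordTwist_iff hk hc (lo_ne_hi i)).mp (hs.semiconjBy i)
    exact
      { clifford := hc
        semiconjBy := ht
        mul_self i := (simpleTwist_mul_self hk hc ht i).symm.trans (hs.mul_self i)
        anticomm i j h := (commute_simpleTwist_iff hk hc ht h).mp (hs.commute i j h)
        braid i j h := (simpleTwist_braid_iff hk hc ht h).mp (hs.braid i j h) }
  · have hc := hf.clifford
    have ht := hf.semiconjBy
    exact
      { clifford := hc
        semiconjBy i := (semiconjBy_cliffordTwist_iff hk hc (lo_ne_hi i)).mpr (ht i)
        mul_self i := (simpleTwist_mul_self hk hc ht i).trans (hf.mul_self i)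
        commute i j h := (commute_simpleTwist_iff hk hc ht h).mpr (hf.anticomm i j h)
        braid i j h := (simpleTwist_braid_iff hk hc ht h).mpr (hf.braid i j h) }

theorem IsTensorFamily.isSergeevFamily_simpleTwist (hf : IsTensorFamily t c) :
    IsSergeevFamily (simpleTwist k c t) c :=
  (isSergeevFamily_simpleTwist_iff hk).mpr hf

theorem IsSergeevFamily.isTensorFamily_simpleTwist {s : Fin (n - 1) → R}
    (hs : IsSergeevFamily s c) : IsTensorFamily (simpleTwist k c s) c := by
  rwa [← isSergeevFamily_simpleTwist_iff (k := -k) (by rwa [neg_sq]),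
    simpleTwist_neg_simpleTwist hk hs.clifford]

end Families

section Presentations

variable {F} {n : ℕ}

theorem isTensorFamily_tS_cS : IsTensorFamily (tS F n) (cS F n) where
  clifford :=
    { mul_self i := by simpa [cS] using RingQuot.mkAlgHom_rel F (SCRel.cc (F := F) i)
      anticomm i j h := semiconjBy_neg_iff.mpr <| by
        simpa [cS] using RingQuot.mkAlgHom_rel F (SCRel.canti (F := F) i j h) }
  semiconjBy i j := semiconjBy_neg_iff.mpr <| by
    simpa [tS, cS] using RingQuot.mkAlgHom_rel F (SCRel.tc (F := F) i j)
  mul_self i := by simpa [tS] using RingQuot.mkAlgHom_rel F (SCRel.tt (F := F) i)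
  anticomm i j h := by simpa [tS] using RingQuot.mkAlgHom_rel F (SCRel.tfar (F := F) i j h)
  braid i j h := by simpa [tS] using RingQuot.mkAlgHom_rel F (SCRel.tbraid (F := F) i j h)

theorem isSergeevFamily_sW_cW : IsSergeevFamily (sW F n) (cW F n) where
  clifford :=
    { mul_self i := by simpa [cW] using RingQuot.mkAlgHom_rel F (WRel.cc (F := F) i)
      anticomm i j h := semiconjBy_neg_iff.mpr <| by
        simpa [cW] using RingQuot.mkAlgHom_rel F (WRel.canti (F := F) i j h) }
  semiconjBy i j := by
    rcases eq_or_ne j (lo i) with rfl | hlo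
    · simpa [sW, cW, SemiconjBy] using RingQuot.mkAlgHom_rel F (WRel.sclo (F := F) i)
    rcases eq_or_ne j (hi i) with rfl | hhi
    · simpa [sW, cW, SemiconjBy] using RingQuot.mkAlgHom_rel F (WRel.schi (F := F) i)
    · rw [Equiv.swap_apply_of_ne_of_ne hlo hhi]
      simpa [sW, cW, SemiconjBy] using RingQuot.mkAlgHom_rel F (WRel.sco (F := F) i j hlo hhi)
  mul_self i := by simpa [sW] using RingQuot.mkAlgHom_rel F (WRel.ss (F := F) i)
  commute i j h := by
    simpa [sW, commute_iff_eq] using RingQuot.mkAlgHom_rel F (WRel.sfar (F := F) i j h)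
  braid i j h := by simpa [sW] using RingQuot.mkAlgHom_rel F (WRel.sbraid (F := F) i j h)

variable {R : Type*} [Ring R] [Algebra F R]

theorem SCRel.lift_eq {t : Fin (n - 1) → R} {c : Fin n → R} (hf : IsTensorFamily t c)
    ⦃x y : FreeAlgebra F (SCGen n)⦄ (h : SCRel F n x y) :
    FreeAlgebra.lift F (SCGen.rec t c) x = FreeAlgebra.lift F (SCGen.rec t c) y := by
  cases h with
  | tt i => simp [sct, hf.mul_self]
  | tbraid i j h => simp [sct, hf.braid i j h]
  | tfar i j h => simp [sct, hf.anticomm i j h]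
  | cc i => simp [scc, hf.clifford.mul_self]
  | canti i j h => simp [scc, (hf.clifford.anticomm h).eq]
  | tc i j => simp [sct, scc, (hf.semiconjBy i j).eq]

theorem WRel.lift_eq {s : Fin (n - 1) → R} {c : Fin n → R} (hs : IsSergeevFamily s c)
    ⦃x y : FreeAlgebra F (WGen n)⦄ (h : WRel F n x y) :
    FreeAlgebra.lift F (WGen.rec s c) x = FreeAlgebra.lift F (WGen.rec s c) y := by
  cases h with
  | ss i => simp [ws, hs.mul_self]
  | sbraid i j h => simp [ws, hs.braid i j h]
  | sfar i j h => simp [ws, (hs.commute i j h).eq]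
  | cc i => simp [wc, hs.clifford.mul_self]
  | canti i j h => simp [wc, (hs.clifford.anticomm h).eq]
  | sclo i => simp [ws, wc, (hs.semiconjBy i (lo i)).eq]
  | schi i => simp [ws, wc, (hs.semiconjBy i (hi i)).eq]
  | sco i j hlo hhi =>
    simp [ws, wc, (hs.semiconjBy i j).eq, Equiv.swap_apply_of_ne_of_ne hlo hhi]

/-- The universal property of `S(n) ⊗ C(n)`: the algebra morphism sending the generators to a
family satisfying the defining relations. -/
noncomputable def SC.lift {t : Fin (n - 1) → R} {c : Fin n → R} (hf : IsTensorFamily t c) :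
    SC F n →ₐ[F] R :=
  RingQuot.liftAlgHom F ⟨FreeAlgebra.lift F (SCGen.rec t c), SCRel.lift_eq hf⟩

/-- The universal property of `W(n)`: the algebra morphism sending the generators to a family
satisfying the defining relations. -/
noncomputable def W.lift {s : Fin (n - 1) → R} {c : Fin n → R} (hs : IsSergeevFamily s c) :
    W F n →ₐ[F] R :=
  RingQuot.liftAlgHom F ⟨FreeAlgebra.lift F (WGen.rec s c), WRel.lift_eq hs⟩

theorem SC.lift_comp_tS {t : Fin (n - 1) → R} {c : Fin n → R} (hf : IsTensorFamily t c) :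
    SC.lift hf ∘ tS F n = t := by
  ext i
  simp [SC.lift, tS, sct]

theorem SC.lift_comp_cS {t : Fin (n - 1) → R} {c : Fin n → R} (hf : IsTensorFamily t c) :
    SC.lift hf ∘ cS F n = c := by
  ext i
  simp [SC.lift, cS, scc]

theorem W.lift_comp_sW {s : Fin (n - 1) → R} {c : Fin n → R} (hs : IsSergeevFamily s c) :
    W.lift hs ∘ sW F n = s := by
  ext i
  simp [W.lift, sW, ws]

theorem W.lift_comp_cW {s : Fin (n - 1) → R} {c : Fin n → R} (hs : IsSergeevFamily s c) :
    W.lift hs ∘ cW F n = c := by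
  ext i
  simp [W.lift, cW, wc]

theorem SC.algHom_ext {f g : SC F n →ₐ[F] R} (ht : f ∘ tS F n = g ∘ tS F n)
    (hc : f ∘ cS F n = g ∘ cS F n) : f = g := by
  ext x
  cases x with
  | t i => exact congrFun ht i
  | c i => exact congrFun hc i

theorem W.algHom_ext {f g : W F n →ₐ[F] R} (hs : f ∘ sW F n = g ∘ sW F n)
    (hc : f ∘ cW F n = g ∘ cW F n) : f = g := by
  ext x
  cases x with
  | s i => exact congrFun hs i
  | c i => exact congrFun hc i

end Presentations

section Equivalence

variable {F} {n : ℕ} {k : F} (hk : 2 * k ^ 2 = -1)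

/-- The morphism `S(n) ⊗ C(n) → W(n)` with `t_i ↦ k s_i (c_i - c_{i+1})` and `c_j ↦ c_j`. -/
noncomputable def tensorToSergeev : SC F n →ₐ[F] W F n :=
  SC.lift (isSergeevFamily_sW_cW.isTensorFamily_simpleTwist hk)

/-- The morphism `W(n) → S(n) ⊗ C(n)` with `s_i ↦ -k t_i (c_i - c_{i+1})` and `c_j ↦ c_j`. -/
noncomputable def sergeevToTensor : W F n →ₐ[F] SC F n :=
  W.lift (isTensorFamily_tS_cS.isSergeevFamily_simpleTwist (k := -k) (by rwa [neg_sq]))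

theorem tensorToSergeev_comp_tS :
    tensorToSergeev hk ∘ tS F n = simpleTwist k (cW F n) (sW F n) :=
  SC.lift_comp_tS _

theorem tensorToSergeev_comp_cS : tensorToSergeev hk ∘ cS F n = cW F n :=
  SC.lift_comp_cS _

theorem sergeevToTensor_comp_sW :
    sergeevToTensor hk ∘ sW F n = simpleTwist (-k) (cS F n) (tS F n) :=
  W.lift_comp_sW _

theorem sergeevToTensor_comp_cW : sergeevToTensor hk ∘ cW F n = cS F n :=
  W.lift_comp_cW _

theorem tensorToSergeev_comp_sergeevToTensor :
    (tensorToSergeev hk).comp (sergeevToTensor hk) = AlgHom.id F (W F n) := by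
  apply W.algHom_ext
  · rw [AlgHom.coe_comp, Function.comp_assoc, sergeevToTensor_comp_sW, comp_simpleTwist,
      tensorToSergeev_comp_cS, tensorToSergeev_comp_tS,
      simpleTwist_neg_simpleTwist hk isSergeevFamily_sW_cW.clifford, AlgHom.coe_id,
      Function.id_comp]
  · rw [AlgHom.coe_comp, Function.comp_assoc, sergeevToTensor_comp_cW, tensorToSergeev_comp_cS,
      AlgHom.coe_id, Function.id_comp]

theorem sergeevToTensor_comp_tensorToSergeev :
    (sergeevToTensor hk).comp (tensorToSergeev hk) = AlgHom.id F (SC F n) := by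
  have hk' : 2 * (-k) ^ 2 = -1 := by rwa [neg_sq]
  have htwist := simpleTwist_neg_simpleTwist hk' (isTensorFamily_tS_cS (F := F) (n := n)).clifford
  rw [neg_neg] at htwist
  apply SC.algHom_ext
  · rw [AlgHom.coe_comp, Function.comp_assoc, tensorToSergeev_comp_tS, comp_simpleTwist,
      sergeevToTensor_comp_cW, sergeevToTensor_comp_sW, htwist, AlgHom.coe_id, Function.id_comp]
  · rw [AlgHom.coe_comp, Function.comp_assoc, tensorToSergeev_comp_cS, sergeevToTensor_comp_cW,
      AlgHom.coe_id, Function.id_comp]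

/-- Sergeev's isomorphism, with `k` in the role of `1 / √(-2)`. -/
noncomputable def sergeevEquiv : SC F n ≃ₐ[F] W F n :=
  AlgEquiv.ofAlgHom (tensorToSergeev hk) (sergeevToTensor hk)
    (tensorToSergeev_comp_sergeevToTensor hk) (sergeevToTensor_comp_tensorToSergeev hk)

theorem sergeevEquiv_cS (i : Fin n) : sergeevEquiv hk (cS F n i) = cW F n i :=
  congrFun (tensorToSergeev_comp_cS hk) i

theorem sergeevEquiv_tS (j : Fin (n - 1)) :
    sergeevEquiv hk (tS F n j) = k • (sW F n j * (cW F n (lo j) - cW F n (hi j))) :=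
  congrFun (tensorToSergeev_comp_tS hk) j

end Equivalence

theorem two_mul_inv_sq {K : Type*} [Field K] (h2 : (2 : K) ≠ 0) {r : K} (hr : r * r = -2) :
    2 * r⁻¹ ^ 2 = -1 := by
  rw [inv_pow, sq, hr, ← div_eq_mul_inv, div_neg, div_self h2]

theorem sergeev_isomorphism_general
    (F : Type) [Field F] (h2 : (2 : F) ≠ 0)
    (n : ℕ) (r : F) (hr : r * r = -2) :
    ∃ φ : SC F n ≃ₐ[F] W F n,
      (∀ i : Fin n, φ (cS F n i) = cW F n i) ∧
      ∀ j : Fin (n - 1),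
        φ (tS F n j) = r⁻¹ • (sW F n j * (cW F n (lo j) - cW F n (hi j))) :=
  have hk := two_mul_inv_sq h2 hr
  ⟨sergeevEquiv hk, sergeevEquiv_cS hk, sergeevEquiv_tS hk⟩

/-- **Sergeev's isomorphism** (Lemma `TW` of Brundan–Kleshchev, after Sergeev):
there is an isomorphism of superalgebras `φ : S(n) ⊗ C(n) → W(n)` with
`φ(1 ⊗ c_i) = c_i` and `φ(t_j ⊗ 1) = (1/√(-2)) s_j (c_j - c_{j+1})`, where
`r = √(-2)` is a fixed square root of `-2` in `F`. -/
theorem sergeev_isomorphism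
    (F : Type) [Field F] [IsAlgClosed F] (h2 : (2 : F) ≠ 0)
    (n : ℕ) (r : F) (hr : r * r = -2) :
    ∃ φ : SC F n ≃ₐ[F] W F n,
      (∀ i : Fin n, φ (cS F n i) = cW F n i) ∧
      ∀ j : Fin (n - 1),
        φ (tS F n j) = r⁻¹ • (sW F n j * (cW F n (lo j) - cW F n (hi j))) :=
  sergeev_isomorphism_general F h2 n r hr

end HC
end
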